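/- Let f : ℝ² → ℝ be a nonconstant real polynomial function of degree d in two variables with only finitely many critical points. Then for every admissible radius R the index i of grad f around the circle of radius R satisfies i ≤ 1 + d̃_R − 2·l''. -/

import Mathlib

open MvPolynomial Filter

/-- Evaluation of a polynomial in two variables at the point `(x, y)`. -/
noncomputable def evalP (f : MvPolynomial (Fin 2) ℝ) (x y : ℝ) : ℝ :=
  MvPolynomial.eval ![x, y] f

/-- `p` is a critical point of `f`: both partial derivatives vanish at `p`. -/
def IsCriticalPt (f : MvPolynomial (Fin 2) ℝ) (p : ℝ × ℝ) : Prop :=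
  evalP (pderiv 0 f) p.1 p.2 = 0 ∧ evalP (pderiv 1 f) p.1 p.2 = 0

/-- `u(t) = f_x(R cos t, R sin t)`. -/
noncomputable def uFun (f : MvPolynomial (Fin 2) ℝ) (R t : ℝ) : ℝ :=
  evalP (pderiv 0 f) (R * Real.cos t) (R * Real.sin t)

/-- `v(t) = f_y(R cos t, R sin t)`. -/
noncomputable def vFun (f : MvPolynomial (Fin 2) ℝ) (R t : ℝ) : ℝ :=
  evalP (pderiv 1 f) (R * Real.cos t) (R * Real.sin t)

/-- The index of `grad f` around the circle of radius `R`, as the winding-number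
integral `(1/(2π)) ∫₀^{2π} (u v' - v u')/(u² + v²) dt`. -/
noncomputable def gradIndex (f : MvPolynomial (Fin 2) ℝ) (R : ℝ) : ℝ :=
  (1 / (2 * Real.pi)) *
    ∫ t in (0:ℝ)..(2 * Real.pi),
      (uFun f R t * deriv (vFun f R) t - vFun f R t * deriv (uFun f R) t) /
        ((uFun f R t) ^ 2 + (vFun f R t) ^ 2)

/-- The multiplicity of the real linear form `b·x − a·y` in `F`: the largest `m`
such that `(b·x − a·y)^m` divides `F` in `ℝ[x,y]`. -/
noncomputable def linMult (F : MvPolynomial (Fin 2) ℝ) (a b : ℝ) : ℕ :=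
  sSup {m : ℕ | (C b * X 0 - C a * X 1) ^ m ∣ F}

/-- The "real degree" of a homogeneous polynomial `F`: the sum, over the points
`[a : b]` of the real projective line (represented by `[a : 1]` for `a ∈ ℝ`,
together with `[1 : 0]`), of the multiplicity of the real linear factor
`b·x − a·y` in `F`; i.e. the sum of the multiplicities of the real linear
factors of `F`. -/
noncomputable def realDegreeOf (F : MvPolynomial (Fin 2) ℝ) : ℕ :=
  (∑ᶠ a : ℝ, linMult F a 1) + linMult F 1 0

/-- The Euclidean norm on `ℝ²`. -/
noncomputable def enorm2 (p : ℝ × ℝ) : ℝ := Real.sqrt (p.1 ^ 2 + p.2 ^ 2)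

/-- The projective direction `[a : b]` is in the closure at infinity of some level set
of `f`: there are `t ∈ ℝ` and points with `f = t` going to infinity whose directions
converge to `[a : b]` in the real projective line (equivalently, the normalized
component along the conormal `(b, −a)` tends to `0`). -/
def DirAtInfinity (f : MvPolynomial (Fin 2) ℝ) (a b : ℝ) : Prop :=
  ∃ t : ℝ, ∃ z : ℕ → ℝ × ℝ,
    (∀ n, evalP f (z n).1 (z n).2 = t) ∧
    Tendsto (fun n => enorm2 (z n)) atTop atTop ∧
    Tendsto (fun n => (b * (z n).1 - a * (z n).2) / enorm2 (z n)) atTop (nhds 0)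

open Classical in
/-- `l''`: the number of points of the real projective line (represented by `[a : 1]`,
`a ∈ ℝ`, together with `[1 : 0]`) lying in the closure of some level set of `f`. -/
noncomputable def lSecond (f : MvPolynomial (Fin 2) ℝ) : ℕ :=
  {a : ℝ | DirAtInfinity f a 1}.ncard + (if DirAtInfinity f 1 0 then 1 else 0)

open Classical in
/-- `d̃_R`: the sum of the multiplicities `d_p` over the points `p = [a : b]` of the
real projective line lying in the closure of some level set of `f`. -/
noncomputable def tildeDR (f : MvPolynomial (Fin 2) ℝ) (d : ℕ) : ℕ :=
  (∑ᶠ a ∈ {a : ℝ | DirAtInfinity f a 1}, linMult (homogeneousComponent d f) a 1) +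
    (if DirAtInfinity f 1 0 then linMult (homogeneousComponent d f) 1 0 else 0)

/-!
Measure the direction of `grad f` in the moving frame of polar coordinates: away from the critical
points it makes an angle `B (r, θ)` with the radial direction, and `B` gains `2π (i - 1)` over a
full turn. Where the leading form `φ θ = f_d (cos θ, sin θ)` does not vanish, the radial derivative
does not vanish for large `r`, so the angle stays within `π / 2` of a multiple `π n` of `π`. The
level `n` can therefore change only at zeros `z` of `φ`.

If `z` is a zero of multiplicity `m`, then near `z` the `m`-th angular derivative of `f` has no
zeros, so by Rolle's theorem the first angular derivative has at most `m - 1` of them; a rise of the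
level by `k` forces `k + 1`, whence `k ≤ m - 2`. If no level set of `f` is asymptotic to `z`, then
on a sector around `z` the polynomial `f` tends to infinity with a constant sign, say to `+∞`. The
radial derivative is then positive wherever the angular derivative vanishes: otherwise `f` would
attain a minimum on the set where it is nonpositive and the angular derivative zero, yet `f`
decreases along that set outwards from the minimum. A rise of the level would make the radial
derivative take both signs there, so the level does not rise. Opposite directions contribute
equally, and summing over a half turn bounds `i - 1` by the sum of `m - 2` over the directions at
infinity.
-/

section PolarCoordinates

lemma hasDerivAt_mvPolynomial_eval {𝕜 σ : Type*} [NontriviallyNormedField 𝕜] [Fintype σ]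
    (p : MvPolynomial σ 𝕜) {x : 𝕜 → σ → 𝕜} {x' : σ → 𝕜} {t : 𝕜}
    (hx : ∀ i, HasDerivAt (fun s ↦ x s i) (x' i) t) :
    HasDerivAt (fun s ↦ eval (x s) p) (∑ i, x' i * eval (x t) (pderiv i p)) t := by
  classical
  induction p using MvPolynomial.induction_on with
  | C a => simpa using hasDerivAt_const t a
  | add p q hp hq =>
    simp only [map_add, mul_add, Finset.sum_add_distrib]
    exact hp.add hq
  | mul_X p j hp =>
    simp only [map_mul, eval_X]
    refine (hp.mul (hx j)).congr_deriv ?_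
    simp [Derivation.leibniz, pderiv_X, Pi.single_apply, Finset.sum_add_distrib, Finset.mul_sum,
      mul_add, mul_comm, mul_left_comm, apply_ite (eval (x t)), add_comm]

lemma isHomogeneous_aeval_mul {R A σ : Type*} [CommSemiring R] [CommSemiring A] [Algebra R A]
    {p : MvPolynomial σ R} {n : ℕ} (hp : p.IsHomogeneous n) (c : A) (x : σ → A) :
    aeval (fun i ↦ c * x i) p = c ^ n * aeval x p := by
  simp only [aeval_def, eval₂_eq, Finset.mul_sum]
  refine Finset.sum_congr rfl fun s hs ↦ ?_
  rw [hp.degree_eq_sum_deg_support hs]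
  simp only [mul_pow, Finset.prod_mul_distrib, Finset.prod_pow_eq_pow_sum]
  ring

/-- Evaluation of a polynomial at the point with polar coordinates `(r, θ)`; the radius `r` may be
any real number. -/
noncomputable def polarEval (r θ : ℝ) : MvPolynomial (Fin 2) ℝ →ₐ[ℝ] ℝ :=
  aeval ![r * Real.cos θ, r * Real.sin θ]

/-- The derivation `x ∂_y - y ∂_x`, that is, differentiation in the polar angle. -/
noncomputable def angularDeriv :
    Derivation ℝ (MvPolynomial (Fin 2) ℝ) (MvPolynomial (Fin 2) ℝ) :=
  (X 0 : MvPolynomial (Fin 2) ℝ) • pderiv 1 - (X 1 : MvPolynomial (Fin 2) ℝ) • pderiv 0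

/-- The Euler derivation `x ∂_x + y ∂_y`, that is, `r` times differentiation in the polar radius. -/
noncomputable def eulerDeriv :
    Derivation ℝ (MvPolynomial (Fin 2) ℝ) (MvPolynomial (Fin 2) ℝ) :=
  (X 0 : MvPolynomial (Fin 2) ℝ) • pderiv 0 + (X 1 : MvPolynomial (Fin 2) ℝ) • pderiv 1

variable (p : MvPolynomial (Fin 2) ℝ)

lemma polarEval_eq_evalP (r θ : ℝ) :
    polarEval r θ p = evalP p (r * Real.cos θ) (r * Real.sin θ) := by
  rw [polarEval, evalP, aeval_eq_eval]

@[simp]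
lemma polarEval_C (r θ c : ℝ) : polarEval r θ (C c) = c := by
  simp [polarEval]

lemma polarEval_angularDeriv (r θ : ℝ) :
    polarEval r θ (angularDeriv p) = r * Real.cos θ * polarEval r θ (pderiv 1 p) -
      r * Real.sin θ * polarEval r θ (pderiv 0 p) := by
  simp [polarEval, angularDeriv]

lemma polarEval_eulerDeriv (r θ : ℝ) :
    polarEval r θ (eulerDeriv p) = r * Real.cos θ * polarEval r θ (pderiv 0 p) +
      r * Real.sin θ * polarEval r θ (pderiv 1 p) := by
  simp [polarEval, eulerDeriv]

lemma continuous_polarEval {X : Type*} [TopologicalSpace X] {r θ : X → ℝ} (hr : Continuous r)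
    (hθ : Continuous θ) : Continuous fun x ↦ polarEval (r x) (θ x) p := by
  simp only [polarEval_eq_evalP]
  refine p.continuous_eval.comp (continuous_pi fun i ↦ ?_)
  fin_cases i
  · exact hr.mul (Real.continuous_cos.comp hθ)
  · exact hr.mul (Real.continuous_sin.comp hθ)

lemma contDiff_polarEval (r : ℝ) {n : WithTop ℕ∞} : ContDiff ℝ n fun θ ↦ polarEval r θ p :=
  AnalyticOnNhd.contDiff <| AnalyticOnNhd.aeval_mvPolynomial (fun i θ _ ↦ by
    fin_cases i
    · exact analyticAt_const.mul Real.analyticAt_cos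
    · exact analyticAt_const.mul Real.analyticAt_sin) p

lemma hasDerivAt_polarEval (r θ : ℝ) :
    HasDerivAt (fun θ ↦ polarEval r θ p) (polarEval r θ (angularDeriv p)) θ := by
  have h := hasDerivAt_mvPolynomial_eval p
    (x := fun θ ↦ ![r * Real.cos θ, r * Real.sin θ]) (t := θ)
    (x' := ![r * -Real.sin θ, r * Real.cos θ]) fun i ↦ by
      fin_cases i
      · simpa using (Real.hasDerivAt_cos θ).const_mul r
      · simpa using (Real.hasDerivAt_sin θ).const_mul r
  refine h.congr_deriv ?_
  rw [polarEval_angularDeriv]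
  simp [polarEval]
  ring

lemma hasDerivAt_polarEval_curve {r Θ : ℝ → ℝ} {r' Θ' t : ℝ} (hr : HasDerivAt r r' t)
    (hΘ : HasDerivAt Θ Θ' t) (hrt : r t ≠ 0) :
    HasDerivAt (fun s ↦ polarEval (r s) (Θ s) p)
      (r' / r t * polarEval (r t) (Θ t) (eulerDeriv p) +
        Θ' * polarEval (r t) (Θ t) (angularDeriv p)) t := by
  have h := hasDerivAt_mvPolynomial_eval p
    (x := fun s ↦ ![r s * Real.cos (Θ s), r s * Real.sin (Θ s)]) (t := t)
    (x' := ![r' * Real.cos (Θ t) + r t * (-Real.sin (Θ t) * Θ'),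
      r' * Real.sin (Θ t) + r t * (Real.cos (Θ t) * Θ')]) fun i ↦ by
      fin_cases i
      · exact hr.mul hΘ.cos
      · exact hr.mul hΘ.sin
  refine h.congr_deriv ?_
  rw [polarEval_angularDeriv, polarEval_eulerDeriv]
  simp [polarEval]
  field_simp
  ring

lemma deriv_polarEval (r : ℝ) :
    deriv (fun θ ↦ polarEval r θ p) = fun θ ↦ polarEval r θ (angularDeriv p) :=
  funext fun θ ↦ (hasDerivAt_polarEval p r θ).deriv

lemma iteratedDeriv_polarEval (r : ℝ) (m : ℕ) :
    iteratedDeriv m (fun θ ↦ polarEval r θ p) = fun θ ↦ polarEval r θ (angularDeriv^[m] p) := by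
  induction m with
  | zero => simp
  | succ m ih => rw [iteratedDeriv_succ, ih, deriv_polarEval, Function.iterate_succ_apply']

lemma polarEval_add_two_pi (r θ : ℝ) : polarEval r (θ + 2 * Real.pi) p = polarEval r θ p := by
  simp [polarEval]

variable {p}

lemma polarEval_of_isHomogeneous {n : ℕ} (hp : p.IsHomogeneous n) (r θ : ℝ) :
    polarEval r θ p = r ^ n * polarEval 1 θ p := by
  rw [polarEval, polarEval, ← isHomogeneous_aeval_mul hp]
  congr 2
  ext i
  fin_cases i <;> simp

lemma isHomogeneous_angularDeriv {n : ℕ} (hp : p.IsHomogeneous n) :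
    (angularDeriv p).IsHomogeneous n := by
  rcases n with - | n
  · obtain ⟨c, rfl⟩ : ∃ c, p = C c :=
      ⟨_, totalDegree_eq_zero_iff_eq_C.mp ((totalDegree_zero_iff_isHomogeneous _).mpr hp)⟩
    simpa [angularDeriv] using isHomogeneous_zero _ _ _
  · have h (i j : Fin 2) : (X i * pderiv j p).IsHomogeneous (n + 1) := by
      simpa [add_comm] using (isHomogeneous_X ℝ i).mul hp.pderiv
    exact (h 0 1).sub (h 1 0)

lemma eulerDeriv_of_isHomogeneous {n : ℕ} (hp : p.IsHomogeneous n) :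
    eulerDeriv p = (n : ℝ) • p := by
  simpa [eulerDeriv, Nat.cast_smul_eq_nsmul] using hp.sum_X_mul_pderiv

end PolarCoordinates


section LeadingForm

variable {R σ : Type*} [CommSemiring R] {L : MvPolynomial σ R →ₗ[R] MvPolynomial σ R}

lemma homogeneousComponent_map_of_isHomogeneous
    (hL : ∀ n p, p.IsHomogeneous n → (L p).IsHomogeneous n) (n : ℕ) (p : MvPolynomial σ R) :
    homogeneousComponent n (L p) = L (homogeneousComponent n p) := by
  conv_lhs => rw [← sum_homogeneousComponent p, map_sum, map_sum]
  simp only [homogeneousComponent_of_mem (hL _ _ (homogeneousComponent_isHomogeneous _ p)),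
    Finset.sum_ite_eq, Finset.mem_range, ite_eq_left_iff, not_lt]
  intro h
  rw [homogeneousComponent_eq_zero _ _ h, map_zero]

lemma totalDegree_map_le_of_isHomogeneous
    (hL : ∀ n p, p.IsHomogeneous n → (L p).IsHomogeneous n) (p : MvPolynomial σ R) :
    (L p).totalDegree ≤ p.totalDegree := by
  conv_lhs => rw [← sum_homogeneousComponent p, map_sum]
  refine totalDegree_finsetSum_le fun k hk ↦ ?_
  exact (hL _ _ (homogeneousComponent_isHomogeneous k p)).totalDegree_le.trans
    (Nat.lt_succ_iff.mp (Finset.mem_range.mp hk))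

variable (p : MvPolynomial (Fin 2) ℝ)

lemma homogeneousComponent_iterate_angularDeriv (m n : ℕ) :
    homogeneousComponent n (angularDeriv^[m] p) = angularDeriv^[m] (homogeneousComponent n p) :=
  Function.Commute.iterate_right (g := angularDeriv) (fun q ↦
    homogeneousComponent_map_of_isHomogeneous (L := angularDeriv.toLinearMap)
      (fun _ _ ↦ isHomogeneous_angularDeriv) n q) m p

lemma totalDegree_iterate_angularDeriv_le (m : ℕ) :
    (angularDeriv^[m] p).totalDegree ≤ p.totalDegree := by
  induction m with
  | zero => exact le_rfl
  | succ m ih =>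
    rw [Function.iterate_succ_apply']
    exact (totalDegree_map_le_of_isHomogeneous (L := angularDeriv.toLinearMap)
      (fun _ _ ↦ isHomogeneous_angularDeriv) _).trans ih

lemma isHomogeneous_eulerDeriv {n : ℕ} {p : MvPolynomial (Fin 2) ℝ} (hp : p.IsHomogeneous n) :
    (eulerDeriv p).IsHomogeneous n := by
  rw [eulerDeriv_of_isHomogeneous hp, smul_eq_C_mul]
  exact hp.C_mul _

lemma homogeneousComponent_eulerDeriv (n : ℕ) :
    homogeneousComponent n (eulerDeriv p) = (n : ℝ) • homogeneousComponent n p := by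
  rw [← eulerDeriv_of_isHomogeneous (homogeneousComponent_isHomogeneous n p)]
  exact homogeneousComponent_map_of_isHomogeneous (L := eulerDeriv.toLinearMap)
    (fun _ _ ↦ isHomogeneous_eulerDeriv) n p

lemma totalDegree_eulerDeriv_le : (eulerDeriv p).totalDegree ≤ p.totalDegree :=
  totalDegree_map_le_of_isHomogeneous (L := eulerDeriv.toLinearMap)
    (fun _ _ ↦ isHomogeneous_eulerDeriv) p

lemma ne_zero_of_one_le_totalDegree {p : MvPolynomial σ R} (hp : 1 ≤ p.totalDegree) : p ≠ 0 := by
  rintro rfl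
  simp at hp

lemma homogeneousComponent_totalDegree_ne_zero {p : MvPolynomial σ R} (hp : p ≠ 0) :
    homogeneousComponent p.totalDegree p ≠ 0 := by
  obtain ⟨s, hs, hdeg⟩ := Finset.exists_mem_eq_sup p.support (support_nonempty.mpr hp)
    fun s ↦ s.sum fun _ e ↦ e
  refine ne_zero_iff.mpr ⟨s, ?_⟩
  rw [coeff_homogeneousComponent, if_pos (by rw [totalDegree, hdeg]; rfl)]
  exact mem_support_iff.mp hs

variable {p}

lemma polarEval_eq_pow_mul_sum {d : ℕ} (hp : p.totalDegree ≤ d) {r : ℝ} (hr : r ≠ 0) (θ : ℝ) :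
    polarEval r θ p = r ^ d * ∑ k ∈ Finset.range (d + 1),
      r⁻¹ ^ (d - k) * polarEval 1 θ (homogeneousComponent k p) := by
  have hsum : p = ∑ k ∈ Finset.range (d + 1), homogeneousComponent k p := by
    conv_lhs => rw [← sum_homogeneousComponent p]
    refine Finset.sum_subset (Finset.range_mono (by lia)) fun k _ hk ↦ ?_
    exact homogeneousComponent_eq_zero _ _ (by simpa using hk)
  conv_lhs => rw [hsum, map_sum]
  rw [Finset.mul_sum]
  refine Finset.sum_congr rfl fun k hk ↦ ?_
  rw [polarEval_of_isHomogeneous (homogeneousComponent_isHomogeneous k p), ← mul_assoc, inv_pow,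
    ← pow_sub₀ r hr (Nat.sub_le d k),
    Nat.sub_sub_self (Nat.lt_succ_iff.mp (Finset.mem_range.mp hk))]

/- In the variable `s = r⁻¹` the rescaled values `r ^ (-d) * p` extend continuously to `s = 0`,
where they equal the degree `d` part of `p`; compactness makes the comparison uniform. -/
lemma eventually_forall_mul_polarEval_pos {d : ℕ} (hp : p.totalDegree ≤ d) {K : Set ℝ}
    (hK : IsCompact K) (h : ∀ θ ∈ K, polarEval 1 θ (homogeneousComponent d p) ≠ 0) :
    ∀ᶠ r in atTop, ∀ θ ∈ K,
      0 < polarEval 1 θ (homogeneousComponent d p) * polarEval r θ p := by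
  let F (s θ : ℝ) : ℝ :=
    ∑ k ∈ Finset.range (d + 1), s ^ (d - k) * polarEval 1 θ (homogeneousComponent k p)
  have hcomp (k : ℕ) : Continuous fun q : ℝ × ℝ ↦ polarEval 1 q.2 (homogeneousComponent k p) :=
    continuous_polarEval _ continuous_const continuous_snd
  have hF : Continuous fun q : ℝ × ℝ ↦
      polarEval 1 q.2 (homogeneousComponent d p) * F q.1 q.2 := by
    refine Continuous.mul (hcomp d) ?_
    exact continuous_finsetSum _ fun k _ ↦ (continuous_fst.pow (d - k)).mul (hcomp k)
  have hF0 (θ : ℝ) : F 0 θ = polarEval 1 θ (homogeneousComponent d p) := by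
    simp only [F, Finset.sum_range_succ, Nat.sub_self, pow_zero, one_mul, add_eq_right]
    refine Finset.sum_eq_zero fun k hk ↦ ?_
    rw [zero_pow (Nat.sub_ne_zero_of_lt (Finset.mem_range.mp hk)), zero_mul]
  have hnear : ∀ᶠ s in nhds (0 : ℝ), ∀ θ ∈ K,
      0 < polarEval 1 θ (homogeneousComponent d p) * F s θ := by
    refine hK.eventually_forall_of_forall_eventually fun θ hθ ↦ ?_
    have hpos : 0 < polarEval 1 θ (homogeneousComponent d p) * F 0 θ := by
      rw [hF0]
      exact mul_self_pos.mpr (h θ hθ)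
    exact hF.continuousAt.eventually_const_lt hpos
  filter_upwards [tendsto_inv_atTop_zero.eventually hnear, eventually_gt_atTop 0]
    with r hr hr0 θ hθ
  rw [polarEval_eq_pow_mul_sum hp hr0.ne', mul_left_comm]
  exact mul_pos (pow_pos hr0 d) (hr θ hθ)

/-- The trigonometric polynomial `θ ↦ f_d (cos θ, sin θ)`, where `f_d` is the homogeneous part of
`f` of degree `d = deg f`. -/
noncomputable def angularPart (f : MvPolynomial (Fin 2) ℝ) (θ : ℝ) : ℝ :=
  polarEval 1 θ (homogeneousComponent f.totalDegree f)

variable (f : MvPolynomial (Fin 2) ℝ)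

lemma contDiff_angularPart {n : WithTop ℕ∞} : ContDiff ℝ n (angularPart f) :=
  contDiff_polarEval _ 1

lemma angularPart_add_pi (θ : ℝ) :
    angularPart f (θ + Real.pi) = (-1) ^ f.totalDegree * angularPart f θ := by
  rw [angularPart, angularPart,
    ← polarEval_of_isHomogeneous (homogeneousComponent_isHomogeneous _ f)]
  simp [polarEval]

variable {f} {K : Set ℝ}

lemma eventually_forall_angularPart_mul_sub_pos (hf : 1 ≤ f.totalDegree) (hK : IsCompact K)
    (h : ∀ θ ∈ K, angularPart f θ ≠ 0) (c : ℝ) :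
    ∀ᶠ r in atTop, ∀ θ ∈ K, 0 < angularPart f θ * (polarEval r θ f - c) := by
  have hC : homogeneousComponent f.totalDegree (C c : MvPolynomial (Fin 2) ℝ) = 0 :=
    homogeneousComponent_eq_zero _ _ (by rw [totalDegree_C]; exact hf)
  have hcomp : homogeneousComponent f.totalDegree (f - C c) =
      homogeneousComponent f.totalDegree f := by rw [map_sub, hC, sub_zero]
  have h' := eventually_forall_mul_polarEval_pos (totalDegree_sub_C_le f c) hK (by rwa [hcomp])
  simpa only [hcomp, map_sub, polarEval_C, angularPart] using h'

lemma eventually_forall_angularPart_mul_eulerDeriv_pos (hf : 1 ≤ f.totalDegree)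
    (hK : IsCompact K) (h : ∀ θ ∈ K, angularPart f θ ≠ 0) :
    ∀ᶠ r in atTop, ∀ θ ∈ K, 0 < angularPart f θ * polarEval r θ (eulerDeriv f) := by
  have hd : (0 : ℝ) < f.totalDegree := by exact_mod_cast hf
  have hcomp (θ : ℝ) : polarEval 1 θ (homogeneousComponent f.totalDegree (eulerDeriv f)) =
      f.totalDegree * angularPart f θ := by
    rw [homogeneousComponent_eulerDeriv, map_smul, smul_eq_mul, angularPart]
  have h' := eventually_forall_mul_polarEval_pos (totalDegree_eulerDeriv_le f) hK
    fun θ hθ ↦ by rw [hcomp]; exact mul_ne_zero hd.ne' (h θ hθ)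
  filter_upwards [h'] with r hr θ hθ
  have := hr θ hθ
  rwa [hcomp, mul_assoc, mul_pos_iff_of_pos_left hd] at this

lemma eventually_forall_iteratedDeriv_mul_iteratedDeriv_polarEval_pos (hK : IsCompact K) {m : ℕ}
    (h : ∀ θ ∈ K, iteratedDeriv m (angularPart f) θ ≠ 0) :
    ∀ᶠ r in atTop, ∀ θ ∈ K,
      0 < iteratedDeriv m (angularPart f) θ * iteratedDeriv m (fun θ ↦ polarEval r θ f) θ := by
  have hm : iteratedDeriv m (angularPart f) = fun θ ↦
      polarEval 1 θ (homogeneousComponent f.totalDegree (angularDeriv^[m] f)) := by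
    rw [homogeneousComponent_iterate_angularDeriv]
    exact iteratedDeriv_polarEval _ 1 m
  simp only [hm] at h ⊢
  simpa only [iteratedDeriv_polarEval] using
    eventually_forall_mul_polarEval_pos (totalDegree_iterate_angularDeriv_le f m) hK h

lemma eventually_forall_deriv_angularPart_mul_angularDeriv_pos (hK : IsCompact K)
    (h : ∀ θ ∈ K, deriv (angularPart f) θ ≠ 0) :
    ∀ᶠ r in atTop, ∀ θ ∈ K,
      0 < deriv (angularPart f) θ * polarEval r θ (angularDeriv f) := by
  simpa only [iteratedDeriv_one, deriv_polarEval] using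
    eventually_forall_iteratedDeriv_mul_iteratedDeriv_polarEval_pos (m := 1) hK
      (by simpa only [iteratedDeriv_one] using h)

end LeadingForm

section LinearFactors

lemma homogeneousComponent_add_mul_of_isHomogeneous {R σ : Type*} [CommSemiring R]
    {p : MvPolynomial σ R} {m : ℕ} (hp : p.IsHomogeneous m) (k : ℕ) (q : MvPolynomial σ R) :
    homogeneousComponent (m + k) (p * q) = p * homogeneousComponent k q := by
  conv_lhs => rw [← sum_homogeneousComponent q, Finset.mul_sum, map_sum]
  simp only [homogeneousComponent_of_mem (hp.mul (homogeneousComponent_isHomogeneous _ q)),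
    add_right_inj, Finset.sum_ite_eq, Finset.mem_range, ite_eq_left_iff, not_lt]
  intro h
  rw [homogeneousComponent_eq_zero _ _ h, mul_zero]

lemma isHomogeneous_right_of_mul {R σ : Type*} [CommRing R] [IsDomain R]
    {p q : MvPolynomial σ R} {m n : ℕ} (hp : p.IsHomogeneous m) (hpq : (p * q).IsHomogeneous n)
    (h0 : p * q ≠ 0) : q.IsHomogeneous (n - m) := by
  have hdeg := totalDegree_mul_of_isDomain (left_ne_zero_of_mul h0) (right_ne_zero_of_mul h0)
  rw [hpq.totalDegree h0, hp.totalDegree (left_ne_zero_of_mul h0)] at hdeg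
  have hq : homogeneousComponent (n - m) q = q := by
    refine mul_left_cancel₀ (left_ne_zero_of_mul h0) ?_
    rw [← homogeneousComponent_add_mul_of_isHomogeneous hp, Nat.add_sub_cancel' (by lia),
      homogeneousComponent_eq_self hpq]
  exact hq ▸ homogeneousComponent_isHomogeneous _ q

/-- The linear form `b x - a y`, which vanishes at `(a, b)`. -/
noncomputable def linForm {R : Type*} [CommRing R] (a b : R) : MvPolynomial (Fin 2) R :=
  C b * X 0 - C a * X 1

lemma isHomogeneous_linForm {R : Type*} [CommRing R] (a b : R) :
    (linForm a b).IsHomogeneous 1 :=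
  (isHomogeneous_C_mul_X b 0).sub (isHomogeneous_C_mul_X a 1)

lemma eval_linForm {R : Type*} [CommRing R] (a b : R) (x : Fin 2 → R) :
    eval x (linForm a b) = b * x 0 - a * x 1 := by
  simp [linForm]

/- Since `u a + v b = 1`, the form `M = u x + v y` satisfies `x ≡ a M` and `y ≡ b M` modulo
`b x - a y`, so that `Q(x, y) ≡ Q(a, b) M ^ n`. -/
lemma linForm_dvd_of_eval_eq_zero {R : Type*} [CommRing R] {Q : MvPolynomial (Fin 2) R} {n : ℕ}
    (hQ : Q.IsHomogeneous n) {a b u v : R} (huv : u * a + v * b = 1) (h0 : eval ![a, b] Q = 0) :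
    linForm a b ∣ Q := by
  rw [← Ideal.mem_span_singleton, ← Ideal.Quotient.eq_zero_iff_mem]
  let π := Ideal.Quotient.mkₐ R (Ideal.span {linForm a b})
  let M : MvPolynomial (Fin 2) R := C u * X 0 + C v * X 1
  have hL (c : R) : π (C c * linForm a b) = 0 :=
    Ideal.Quotient.eq_zero_iff_mem.mpr (Ideal.mul_mem_left _ _ (Ideal.mem_span_singleton_self _))
  have huvC : (C u * C a + C v * C b : MvPolynomial (Fin 2) R) = 1 := by
    simp only [← C_mul, ← C_add, huv, C_1]
  have hX (i : Fin 2) : π (X i) = π M * algebraMap R _ (![a, b] i) := by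
    rw [← AlgHom.commutes π, algebraMap_eq, ← map_mul, ← sub_eq_zero, ← map_sub]
    fin_cases i
    · rw [← hL v]
      congr 1
      simp only [Fin.zero_eta, Matrix.cons_val_zero, M, linForm]
      linear_combination -X 0 * huvC
    · rw [← hL (-u)]
      congr 1
      simp only [Fin.mk_one, Matrix.cons_val_one, Matrix.cons_val_fin_one, M, linForm, C_neg]
      linear_combination -X 1 * huvC
  have hab : aeval (fun i ↦ algebraMap R (MvPolynomial (Fin 2) R ⧸ Ideal.span {linForm a b})
      (![a, b] i)) Q = 0 := by
    simpa [Function.comp_def, aeval_eq_eval, h0] using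
      aeval_algebraMap_apply (MvPolynomial (Fin 2) R ⧸ Ideal.span {linForm a b}) ![a, b] Q
  calc π Q = aeval (fun i ↦ π (X i)) Q := by rw [← comp_aeval_apply, aeval_X_left_apply]
    _ = π M ^ n * aeval (fun i ↦ algebraMap R _ (![a, b] i)) Q := by
      simp only [hX, isHomogeneous_aeval_mul hQ]
    _ = 0 := by rw [hab, mul_zero]

lemma linMult_eq_sSup_linForm (Q : MvPolynomial (Fin 2) ℝ) (a b : ℝ) :
    linMult Q a b = sSup {m : ℕ | linForm a b ^ m ∣ Q} :=
  rfl

lemma linMult_smul {a b c : ℝ} (hc : c ≠ 0) (Q : MvPolynomial (Fin 2) ℝ) :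
    linMult Q (c * a) (c * b) = linMult Q a b := by
  have hL : linForm (c * a) (c * b) = C c * linForm a b := by
    simp only [linForm, C_mul]
    ring
  have hunit : IsUnit (C c : MvPolynomial (Fin 2) ℝ) := (IsUnit.mk0 c hc).map C
  simp only [linMult_eq_sSup_linForm, hL, mul_pow, (hunit.pow _).mul_left_dvd]

variable {Q : MvPolynomial (Fin 2) ℝ} {n : ℕ}

lemma exists_eq_linForm_pow_linMult_mul (hQ : Q.IsHomogeneous n) (hQ0 : Q ≠ 0) (z : ℝ) :
    ∃ q, Q = linForm (Real.cos z) (Real.sin z) ^ linMult Q (Real.cos z) (Real.sin z) * q ∧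
      polarEval 1 z q ≠ 0 := by
  set L := linForm (Real.cos z) (Real.sin z) with hL
  have hunit : ¬IsUnit L := fun h ↦ by
    have := h.map (eval ![Real.cos z, Real.sin z])
    simp [hL, eval_linForm, mul_comm] at this
  have hfin : FiniteMultiplicity L Q := .of_not_isUnit hunit hQ0
  have hmult : linMult Q (Real.cos z) (Real.sin z) = multiplicity L Q := by
    have : {m : ℕ | L ^ m ∣ Q} = Set.Iic (multiplicity L Q) :=
      Set.ext fun k ↦ hfin.pow_dvd_iff_le_multiplicity
    rw [linMult_eq_sSup_linForm, this, csSup_Iic]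
  obtain ⟨q, hq, hndvd⟩ := hfin.exists_eq_pow_mul_and_not_dvd
  refine ⟨q, by rwa [hmult], fun h0 ↦ hndvd ?_⟩
  have hq_hom := isHomogeneous_right_of_mul ((isHomogeneous_linForm _ _).pow _) (hq ▸ hQ)
    (hq ▸ hQ0)
  refine linForm_dvd_of_eval_eq_zero hq_hom (u := Real.cos z) (v := Real.sin z) ?_ ?_
  · linear_combination Real.sin_sq_add_cos_sq z
  · simpa [polarEval] using h0

lemma analyticAt_polarEval (p : MvPolynomial (Fin 2) ℝ) (r z : ℝ) :
    AnalyticAt ℝ (fun θ ↦ polarEval r θ p) z :=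
  (contDiff_polarEval p r (n := ⊤)).contDiffAt.analyticAt

lemma analyticOrderAt_polarEval_eq_linMult (hQ : Q.IsHomogeneous n) (hQ0 : Q ≠ 0) (z : ℝ) :
    analyticOrderAt (fun θ ↦ polarEval 1 θ Q) z = linMult Q (Real.cos z) (Real.sin z) := by
  obtain ⟨q, hq, hqz⟩ := exists_eq_linForm_pow_linMult_mul hQ hQ0 z
  have hL : analyticOrderAt (fun θ ↦ polarEval 1 θ (linForm (Real.cos z) (Real.sin z))) z = 1 := by
    refine (analyticAt_polarEval _ 1 z).analyticOrderAt_eq_one_of_zero_deriv_ne_zero ?_ ?_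
    · simp [polarEval, eval_linForm, mul_comm]
    · have h0 : pderiv 0 (linForm (Real.cos z) (Real.sin z)) = C (Real.sin z) := by
        simp [linForm, pderiv_X]
      have h1 : pderiv 1 (linForm (Real.cos z) (Real.sin z)) = C (-Real.cos z) := by
        simp [linForm, pderiv_X]
      simp only [deriv_polarEval, polarEval_angularDeriv, h0, h1, polarEval_C]
      nlinarith [Real.sin_sq_add_cos_sq z]
  have hq0 : analyticOrderAt (fun θ ↦ polarEval 1 θ q) z = 0 :=
    analyticOrderAt_eq_zero.mpr (.inr hqz)
  have hfactor : (fun θ ↦ polarEval 1 θ Q) =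
      (fun θ ↦ polarEval 1 θ (linForm (Real.cos z) (Real.sin z))) ^
        linMult Q (Real.cos z) (Real.sin z) * fun θ ↦ polarEval 1 θ q := by
    ext θ
    conv_lhs => rw [hq]
    simp only [map_mul, map_pow, Pi.mul_apply, Pi.pow_apply]
  rw [hfactor, analyticOrderAt_mul ((analyticAt_polarEval _ 1 z).pow _)
    (analyticAt_polarEval q 1 z), analyticOrderAt_pow (analyticAt_polarEval _ 1 z), hL, hq0]
  simp

lemma analyticOrderAt_angularPart {f : MvPolynomial (Fin 2) ℝ} (hf : f ≠ 0) (z : ℝ) :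
    analyticOrderAt (angularPart f) z =
      linMult (homogeneousComponent f.totalDegree f) (Real.cos z) (Real.sin z) :=
  analyticOrderAt_polarEval_eq_linMult (homogeneousComponent_isHomogeneous _ f)
    (homogeneousComponent_totalDegree_ne_zero hf) z

end LinearFactors


section RealZeros

lemma mul_pos_of_continuousOn_of_ne_zero {X : Type*} [TopologicalSpace X] {s : Set X} {f : X → ℝ}
    (hs : IsPreconnected s) (hf : ContinuousOn f s) (h0 : ∀ x ∈ s, f x ≠ 0) {x y : X}
    (hx : x ∈ s) (hy : y ∈ s) : 0 < f x * f y := by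
  by_contra! h
  have hzero : (0 : ℝ) ∈ Set.uIcc (f x) (f y) := by
    rw [Set.mem_uIcc]
    exact (mul_nonpos_iff.mp h).symm.imp_right And.symm
  obtain ⟨z, hz, hfz⟩ := (hs.image f hf).ordConnected.uIcc_subset
    (Set.mem_image_of_mem f hx) (Set.mem_image_of_mem f hy) hzero
  exact h0 z hz hfz

lemma finite_setOf_eq_zero_of_isCompact {X Y : Type*} [TopologicalSpace X] [Zero Y] {f : X → Y}
    {K : Set X} (hK : IsCompact K) (hf : ∀ x ∈ K, ∀ᶠ y in nhdsWithin x {x}ᶜ, f y ≠ 0) :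
    {x ∈ K | f x = 0}.Finite := by
  by_contra hinf
  obtain ⟨x, hx, hacc⟩ :=
    Set.Infinite.exists_accPt_of_subset_isCompact hinf hK (Set.sep_subset _ _)
  obtain ⟨y, hy, hy'⟩ := ((accPt_iff_frequently_nhdsNE.mp hacc).and_eventually (hf x hx)).exists
  exact hy' hy.2

/- Writing `f = (x - z) ^ n * g` with `g z ≠ 0`, the product `(x - z) * (f * f')` is
`(x - z) ^ (2 * n)` times a function with value `n * g z ^ 2 > 0` at `z`. -/
lemma eventually_sub_mul_mul_deriv_pos {f : ℝ → ℝ} {z : ℝ} (hf : AnalyticAt ℝ f z) (hfz : f z = 0)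
    (hord : analyticOrderAt f z ≠ ⊤) :
    ∀ᶠ x in nhdsWithin z {z}ᶜ, 0 < (x - z) * (f x * deriv f x) := by
  obtain ⟨g, hg, hgz, hfg⟩ := hf.analyticOrderAt_ne_top.mp hord
  set n := analyticOrderNatAt f z
  have hn : 0 < n := by
    refine Nat.pos_of_ne_zero fun hn ↦ hgz ?_
    simpa [hn, hfz] using hfg.self_of_nhds.symm
  obtain ⟨k, hk⟩ := Nat.exists_eq_succ_of_ne_zero hn.ne'
  have hderiv : ∀ᶠ x in nhds z,
      deriv f x = n * (x - z) ^ k * g x + (x - z) ^ n * deriv g x := by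
    filter_upwards [hfg.eventually_nhds, hg.eventually_analyticAt] with x hx hgx
    have h1 : HasDerivAt (fun x ↦ (x - z) ^ n) (n * (x - z) ^ k) x := by
      refine (((hasDerivAt_id x).sub_const z).fun_pow n).congr_deriv ?_
      simp [hk]
    simp only [smul_eq_mul] at hx
    rw [Filter.EventuallyEq.deriv_eq hx]
    exact (h1.mul hgx.differentiableAt.hasDerivAt).deriv
  have hbracket : ∀ᶠ x in nhds z, 0 < n * g x ^ 2 + (x - z) * g x * deriv g x := by
    have hcont : ContinuousAt (fun x ↦ n * g x ^ 2 + (x - z) * g x * deriv g x) z := by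
      have := hg.continuousAt
      have := hg.deriv.continuousAt
      fun_prop
    refine hcont.eventually_const_lt ?_
    have : (0 : ℝ) < n := by exact_mod_cast hn
    simpa using mul_pos this (sq_pos_of_ne_zero hgz)
  filter_upwards [eventually_nhdsWithin_of_eventually_nhds (hfg.and (hderiv.and hbracket)),
    self_mem_nhdsWithin] with x hx hxz
  obtain ⟨hfx, hdx, hbx⟩ := hx
  calc 0 < (x - z) ^ (2 * n) * (n * g x ^ 2 + (x - z) * g x * deriv g x) :=
        mul_pos ((even_two_mul n).pow_pos (sub_ne_zero.mpr hxz)) hbx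
    _ = (x - z) * (f x * deriv f x) := by
      rw [hfx, hdx, smul_eq_mul, hk, Nat.succ_eq_add_one]
      push_cast
      ring

lemma eventually_ne_zero_of_analyticOrderAt_ne_top {f : ℝ → ℝ} {z : ℝ} (hf : AnalyticAt ℝ f z)
    (hord : analyticOrderAt f z ≠ ⊤) : ∀ᶠ x in nhdsWithin z {z}ᶜ, f x ≠ 0 :=
  hf.eventually_eq_zero_or_eventually_ne_zero.resolve_left
    fun h ↦ hord (analyticOrderAt_eq_top.mpr h)

lemma card_zeros_le_of_iteratedDeriv_ne_zero {k : ℕ} {g : ℝ → ℝ} {a b : ℝ} (hg : ContDiff ℝ k g)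
    (hk : ∀ x ∈ Set.Icc a b, iteratedDeriv k g x ≠ 0) {s : Finset ℝ} (hs : ↑s ⊆ Set.Icc a b)
    (h0 : ∀ x ∈ s, g x = 0) : s.card ≤ k := by
  induction k generalizing g s with
  | zero =>
    refine (Finset.card_eq_zero.mpr (Finset.eq_empty_of_forall_notMem fun x hx ↦ ?_)).le
    exact hk x (hs hx) (by simpa using h0 x hx)
  | succ k ih =>
    have hrolle : ∀ x y, x ∈ s → y ∈ s → x < y → ∃ c ∈ Set.Ioo x y, deriv g c = 0 :=
      fun x y hx hy hxy ↦ exists_deriv_eq_zero hxy hg.continuous.continuousOn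
        ((h0 x hx).trans (h0 y hy).symm)
    choose! c hc hgc using hrolle
    let t := ((s ×ˢ s).filter fun q ↦ q.1 < q.2).image fun q ↦ c q.1 q.2
    have ht : ∀ w ∈ t, ∃ x ∈ s, ∃ y ∈ s, x < y ∧ c x y = w := by
      simp [t, and_assoc]
    have hst : s.card ≤ t.card + 1 := by
      refine Finset.card_le_of_interleaved fun x hx y hy hxy _ ↦
        ⟨c x y, ?_, hc x y hx hy hxy⟩
      exact Finset.mem_image.mpr ⟨(x, y), by simp [hx, hy, hxy], rfl⟩
    refine hst.trans (Nat.succ_le_succ (ih (g := deriv g) ?_ ?_ ?_ ?_))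
    · exact (contDiff_succ_iff_deriv.mp hg).2.2
    · simpa only [iteratedDeriv_succ'] using hk
    · intro w hw
      obtain ⟨x, hx, y, hy, hxy, rfl⟩ := ht w hw
      exact ⟨(hs hx).1.trans (hc x y hx hy hxy).1.le, (hc x y hx hy hxy).2.le.trans (hs hy).2⟩
    · intro w hw
      obtain ⟨x, hx, y, hy, hxy, rfl⟩ := ht w hw
      exact hgc x y hx hy hxy

/-- `ε` isolates the zero `z` of `φ`: on `[z - ε, z + ε]` the function `φ` moves away from zero, in
the sense that `φ φ'` is negative to the left of `z` and positive to the right of `z`. -/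
structure IsolatesZero (φ : ℝ → ℝ) (z ε : ℝ) : Prop where
  pos : 0 < ε
  lt_pi : ε < Real.pi
  mul_deriv_pos : ∀ θ ∈ Set.Icc (z - ε) (z + ε), θ ≠ z → 0 < (θ - z) * (φ θ * deriv φ θ)

namespace IsolatesZero

variable {φ : ℝ → ℝ} {z ε θ : ℝ}

lemma left_mem (h : IsolatesZero φ z ε) : z - ε ∈ Set.Icc (z - ε) (z + ε) :=
  Set.left_mem_Icc.mpr (by linarith [h.pos])

lemma right_mem (h : IsolatesZero φ z ε) : z + ε ∈ Set.Icc (z - ε) (z + ε) :=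
  Set.right_mem_Icc.mpr (by linarith [h.pos])

lemma ne_zero (h : IsolatesZero φ z ε) (hθ : θ ∈ Set.Icc (z - ε) (z + ε)) (hne : θ ≠ z) :
    φ θ ≠ 0 :=
  left_ne_zero_of_mul (right_ne_zero_of_mul (h.mul_deriv_pos θ hθ hne).ne')

lemma deriv_ne_zero (h : IsolatesZero φ z ε) (hθ : θ ∈ Set.Icc (z - ε) (z + ε)) (hne : θ ≠ z) :
    deriv φ θ ≠ 0 :=
  right_ne_zero_of_mul (right_ne_zero_of_mul (h.mul_deriv_pos θ hθ hne).ne')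

end IsolatesZero

lemma eventually_forall_mem_Icc_of_eventually_nhds {z : ℝ} {p : ℝ → Prop}
    (h : ∀ᶠ θ in nhds z, p θ) :
    ∀ᶠ ε in nhdsWithin 0 (Set.Ioi 0), ∀ θ ∈ Set.Icc (z - ε) (z + ε), p θ := by
  obtain ⟨δ, hδ, hball⟩ := Metric.eventually_nhds_iff_ball.mp h
  filter_upwards [Ioo_mem_nhdsGT hδ] with ε hε θ hθ
  rw [← Real.closedBall_eq_Icc] at hθ
  exact hball θ (Metric.closedBall_subset_ball hε.2 hθ)

lemma eventually_isolatesZero {φ : ℝ → ℝ} {z : ℝ} (hφ : AnalyticAt ℝ φ z) (hφz : φ z = 0)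
    (hord : analyticOrderAt φ z ≠ ⊤) : ∀ᶠ ε in nhdsWithin 0 (Set.Ioi 0), IsolatesZero φ z ε := by
  filter_upwards [eventually_forall_mem_Icc_of_eventually_nhds
    (eventually_nhdsWithin_iff.mp (eventually_sub_mul_mul_deriv_pos hφ hφz hord)),
    Ioo_mem_nhdsGT Real.pi_pos] with ε hpos hε
  exact ⟨hε.1, hε.2, hpos⟩

end RealZeros

section DirectionsAtInfinity

variable {f : MvPolynomial (Fin 2) ℝ}

lemma dirAtInfinity_smul {a b c : ℝ} (hc : c ≠ 0) :
    DirAtInfinity f (c * a) (c * b) ↔ DirAtInfinity f a b := by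
  have key (a b c : ℝ) (h : DirAtInfinity f a b) : DirAtInfinity f (c * a) (c * b) := by
    obtain ⟨t, p, hlevel, hnorm, hdir⟩ := h
    refine ⟨t, p, hlevel, hnorm, ?_⟩
    have hscale := hdir.const_mul c
    rw [mul_zero] at hscale
    exact hscale.congr fun n ↦ by ring
  refine ⟨fun h ↦ ?_, key a b c⟩
  simpa only [inv_mul_cancel_left₀ hc] using key _ _ c⁻¹ h

lemma enorm2_polar {r : ℝ} (hr : 0 ≤ r) (θ : ℝ) :
    enorm2 (r * Real.cos θ, r * Real.sin θ) = r := by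
  have h : (r * Real.cos θ) ^ 2 + (r * Real.sin θ) ^ 2 = r ^ 2 := by
    linear_combination r ^ 2 * Real.sin_sq_add_cos_sq θ
  rw [enorm2, h, Real.sqrt_sq hr]

lemma exists_polar_eq (p : ℝ × ℝ) : ∃ θ ∈ Set.Icc (-Real.pi) Real.pi,
    p = (enorm2 p * Real.cos θ, enorm2 p * Real.sin θ) := by
  have hnorm : enorm2 p = ‖(⟨p.1, p.2⟩ : ℂ)‖ := by
    rw [enorm2, Complex.norm_eq_sqrt_sq_add_sq]
  refine ⟨Complex.arg ⟨p.1, p.2⟩, ⟨(Complex.neg_pi_lt_arg _).le, Complex.arg_le_pi _⟩, ?_⟩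
  rw [hnorm, Complex.norm_mul_cos_arg, Complex.norm_mul_sin_arg]

lemma conormal_polar_div_enorm2 {r : ℝ} (hr : 0 < r) (z θ : ℝ) :
    (Real.sin z * (r * Real.cos θ) - Real.cos z * (r * Real.sin θ)) /
      enorm2 (r * Real.cos θ, r * Real.sin θ) = Real.sin (z - θ) := by
  rw [enorm2_polar hr.le, Real.sin_sub, div_eq_iff hr.ne']
  ring

lemma dirAtInfinity_of_tendsto_polar {r θ : ℕ → ℝ} {z c : ℝ} (hr : Tendsto r atTop atTop)
    (hθ : Tendsto θ atTop (nhds z)) (hc : ∀ n, polarEval (r n) (θ n) f = c) :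
    DirAtInfinity f (Real.cos z) (Real.sin z) := by
  have hpos := hr.eventually (eventually_gt_atTop 0)
  refine ⟨c, fun n ↦ (r n * Real.cos (θ n), r n * Real.sin (θ n)), fun n ↦ ?_, ?_, ?_⟩
  · rw [← hc n, polarEval_eq_evalP]
  · exact hr.congr' (hpos.mono fun n hn ↦ (enorm2_polar hn.le _).symm)
  · have hsin : Tendsto (fun n ↦ Real.sin (z - θ n)) atTop (nhds (Real.sin (z - z))) :=
      (Real.continuous_sin.tendsto _).comp (tendsto_const_nhds.sub hθ)
    rw [sub_self, Real.sin_zero] at hsin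
    exact hsin.congr' (hpos.mono fun n hn ↦ (conormal_polar_div_enorm2 hn z (θ n)).symm)

lemma eventually_forall_polarEval_ne (hf : 1 ≤ f.totalDegree) {K : Set ℝ} (hK : IsCompact K)
    (h : ∀ θ ∈ K, angularPart f θ ≠ 0) (c : ℝ) :
    ∀ᶠ r in atTop, ∀ θ ∈ K, polarEval r θ f ≠ c :=
  (eventually_forall_angularPart_mul_sub_pos hf hK h c).mono fun _ hr θ hθ ↦
    sub_ne_zero.mp (right_ne_zero_of_mul (hr θ hθ).ne')

lemma dirAtInfinity_of_frequently (hf : 1 ≤ f.totalDegree) {K : Set ℝ} (hK : IsCompact K)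
    {z c : ℝ} (hφ : ∀ θ ∈ K, θ ≠ z → angularPart f θ ≠ 0)
    (hfr : ∃ᶠ r in atTop, ∃ θ ∈ K, polarEval r θ f = c) :
    DirAtInfinity f (Real.cos z) (Real.sin z) := by
  choose r hr θ hθ hc using fun n : ℕ ↦ frequently_atTop.mp hfr n
  have hrt : Tendsto r atTop atTop := tendsto_atTop_mono hr tendsto_natCast_atTop_atTop
  refine dirAtInfinity_of_tendsto_polar hrt ?_ hc
  rw [tendsto_nhds]
  intro U hU hzU
  have hev := eventually_forall_polarEval_ne hf (hK.diff hU)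
    (fun θ hθ ↦ hφ θ hθ.1 fun h ↦ hθ.2 (h ▸ hzU)) c
  filter_upwards [hrt.eventually hev] with n hn
  by_contra hmem
  exact hn (θ n) ⟨hθ n, hmem⟩ (hc n)

lemma angularPart_eq_zero_of_sin_sub_eq_zero {z θ : ℝ} (h : Real.sin (z - θ) = 0)
    (hθ : angularPart f θ = 0) : angularPart f z = 0 := by
  obtain ⟨k, hk⟩ := Real.sin_eq_zero_iff.mp h
  have hper : Function.Periodic (fun θ ↦ angularPart f θ = 0) Real.pi := fun θ ↦ by
    simp [angularPart_add_pi]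
  rw [show z = θ + k * Real.pi by linarith]
  exact (hper.int_mul k θ).mpr hθ

lemma angularPart_eq_zero_of_dirAtInfinity (hf : 1 ≤ f.totalDegree) {z : ℝ}
    (h : DirAtInfinity f (Real.cos z) (Real.sin z)) : angularPart f z = 0 := by
  obtain ⟨t, p, hlevel, hnorm, hdir⟩ := h
  choose θ hθ hp using fun n ↦ exists_polar_eq (p n)
  obtain ⟨θ₀, -, k, hk, hlim⟩ := isCompact_Icc.tendsto_subseq hθ
  have hr := hnorm.comp hk.tendsto_atTop
  have hsin : Real.sin (z - θ₀) = 0 := by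
    have hcont : Tendsto (fun n ↦ Real.sin (z - θ (k n))) atTop (nhds (Real.sin (z - θ₀))) :=
      (Real.continuous_sin.tendsto _).comp (tendsto_const_nhds.sub hlim)
    refine tendsto_nhds_unique hcont ((hdir.comp hk.tendsto_atTop).congr' ?_)
    filter_upwards [hr.eventually (eventually_gt_atTop 0)] with n hn
    rw [← conormal_polar_div_enorm2 hn z (θ (k n))]
    simp only [Function.comp_apply]
    conv_lhs => rw [hp (k n)]
  refine angularPart_eq_zero_of_sin_sub_eq_zero hsin ?_
  by_contra hne
  obtain ⟨δ, hδ, hball⟩ := Metric.nhds_basis_closedBall.eventually_iff.mp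
    (((contDiff_angularPart f (n := 0)).continuous.tendsto θ₀).eventually_ne hne)
  have hev := eventually_forall_polarEval_ne hf (isCompact_closedBall θ₀ δ) (fun _ ↦ @hball _) t
  obtain ⟨n, hmem, hn⟩ :=
    ((hlim.eventually (Metric.closedBall_mem_nhds θ₀ hδ)).and (hr.eventually hev)).exists
  refine hn _ hmem ?_
  have := hlevel (k n)
  rw [hp (k n)] at this
  rwa [polarEval_eq_evalP]

lemma eventually_forall_mul_sub_pos_of_not_dirAtInfinity (hf : 1 ≤ f.totalDegree) {z ε : ℝ}
    (hε : 0 < ε) (hφ : ∀ θ ∈ Set.Icc (z - ε) (z + ε), θ ≠ z → angularPart f θ ≠ 0)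
    (hz : ¬ DirAtInfinity f (Real.cos z) (Real.sin z)) (c : ℝ) :
    ∀ᶠ r in atTop, ∀ θ ∈ Set.Icc (z - ε) (z + ε),
      0 < angularPart f (z + ε) * (polarEval r θ f - c) := by
  have hne : ∀ᶠ r in atTop, ¬ ∃ θ ∈ Set.Icc (z - ε) (z + ε), polarEval r θ f = c :=
    not_frequently.mp fun h ↦ hz (dirAtInfinity_of_frequently hf isCompact_Icc hφ h)
  have hmem : z + ε ∈ Set.Icc (z - ε) (z + ε) := ⟨by linarith, le_rfl⟩
  have hedge := eventually_forall_angularPart_mul_sub_pos hf (isCompact_singleton (x := z + ε))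
    (by rintro _ rfl; exact hφ _ hmem (by linarith)) c
  filter_upwards [hne, hedge] with r hr hsign θ hθ
  have hcont : Continuous fun θ ↦ polarEval r θ f - c :=
    (continuous_polarEval f continuous_const continuous_id).sub continuous_const
  have hsame : 0 < (polarEval r (z + ε) f - c) * (polarEval r θ f - c) :=
    mul_pos_of_continuousOn_of_ne_zero (f := fun θ ↦ polarEval r θ f - c) isPreconnected_Icc
      hcont.continuousOn (fun x hx h ↦ hr ⟨x, hx, sub_eq_zero.mp h⟩) hmem hθ
  refine (mul_pos_iff_of_pos_right
    (mul_self_pos.mpr (right_ne_zero_of_mul (hsign _ rfl).ne'))).mp ?_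
  calc 0 < angularPart f (z + ε) * (polarEval r (z + ε) f - c) *
          ((polarEval r (z + ε) f - c) * (polarEval r θ f - c)) := mul_pos (hsign _ rfl) hsame
    _ = _ := by ring

end DirectionsAtInfinity

section SquarefreePart

variable {R : Type*} [CommRing R]

lemma exists_map_eq_C_mul (K : Type*) [Field K] [Algebra R K] [IsFractionRing R K]
    (p : Polynomial K) : ∃ c ∈ nonZeroDivisors R, ∃ q : Polynomial R,
      q.map (algebraMap R K) = Polynomial.C (algebraMap R K c) * p := by
  obtain ⟨c, hc, h⟩ := IsLocalization.integerNormalization_spec (nonZeroDivisors R) p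
  exact ⟨c, hc, _, h.trans (by rw [← Polynomial.smul_eq_C_mul, algebraMap_smul])⟩

variable [IsDomain R]

lemma exists_dvd_C_mul_of_map_dvd_map (K : Type*) [Field K] [Algebra R K] [IsFractionRing R K]
    {p q : Polynomial R} (h : p.map (algebraMap R K) ∣ q.map (algebraMap R K)) :
    ∃ c ≠ 0, p ∣ Polynomial.C c * q := by
  obtain ⟨u, hu⟩ := h
  obtain ⟨c, hc, U, hU⟩ := exists_map_eq_C_mul (R := R) K u
  refine ⟨c, nonZeroDivisors.ne_zero hc, U,
    Polynomial.map_injective _ (IsFractionRing.injective R K) ?_⟩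
  rw [Polynomial.map_mul, Polynomial.map_mul, Polynomial.map_C, hU, hu]
  ring

lemma exists_mul_add_mul_derivative_eq_C (K : Type*) [Field K] [Algebra R K] [IsFractionRing R K]
    {p : Polynomial R} (h : (p.map (algebraMap R K)).Separable) :
    ∃ c ≠ 0, ∃ a b : Polynomial R, a * p + b * p.derivative = Polynomial.C c := by
  obtain ⟨a, b, hab⟩ := h
  obtain ⟨c, hc, A, hA⟩ := exists_map_eq_C_mul (R := R) K a
  obtain ⟨d, hd, B, hB⟩ := exists_map_eq_C_mul (R := R) K b
  refine ⟨c * d, mul_ne_zero (nonZeroDivisors.ne_zero hc) (nonZeroDivisors.ne_zero hd),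
    Polynomial.C d * A, Polynomial.C c * B,
    Polynomial.map_injective _ (IsFractionRing.injective R K) ?_⟩
  simp only [Polynomial.map_mul, Polynomial.map_add, Polynomial.map_C, hA, hB,
    ← Polynomial.derivative_map, map_mul]
  linear_combination Polynomial.C (algebraMap R K c) * Polynomial.C (algebraMap R K d) * hab

/- Take the squarefree part over the fraction field, where squarefree means separable in
characteristic zero, and clear denominators. -/
lemma exists_squarefree_part [CharZero R] {p : Polynomial R} (hp : p ≠ 0) :
    ∃ (q : Polynomial R) (c : R) (n : ℕ), c ≠ 0 ∧ q ∣ Polynomial.C c * p ∧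
      p ∣ Polynomial.C c * q ^ n ∧
      ∃ a b : Polynomial R, a * q + b * q.derivative = Polynomial.C c := by
  let K := FractionRing R
  have hinj := IsFractionRing.injective R K
  have : CharZero K := charZero_of_injective_algebraMap hinj
  obtain ⟨g, n, hg, hgp, hpg⟩ := exists_squarefree_dvd_pow_of_ne_zero
    ((Polynomial.map_ne_zero_iff hinj).mpr hp)
  obtain ⟨e, he, q, hq⟩ := exists_map_eq_C_mul (R := R) K g
  have hassoc : Associated g (q.map (algebraMap R K)) := by
    have hunit : IsUnit (Polynomial.C (algebraMap R K e)) := Polynomial.isUnit_C.mpr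
      (isUnit_iff_ne_zero.mpr ((map_ne_zero_iff _ hinj).mpr (nonZeroDivisors.ne_zero he)))
    rw [hq]
    exact associated_unit_mul_right g _ hunit
  obtain ⟨c₁, hc₁, h₁⟩ := exists_dvd_C_mul_of_map_dvd_map K (hassoc.dvd_iff_dvd_left.mp hgp)
  obtain ⟨c₂, hc₂, h₂⟩ := exists_dvd_C_mul_of_map_dvd_map K (p := p) (q := q ^ n) (by
    rw [Polynomial.map_pow]
    exact ((hassoc.pow_pow (n := n)).dvd_iff_dvd_right).mp hpg)
  obtain ⟨c₃, hc₃, a, b, h₃⟩ := exists_mul_add_mul_derivative_eq_C K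
    (PerfectField.separable_iff_squarefree.mpr (hassoc.squarefree_iff.mp hg))
  refine ⟨q, c₁ * c₂ * c₃, n, by simp [hc₁, hc₂, hc₃], ?_, ?_,
    Polynomial.C (c₁ * c₂) * a, Polynomial.C (c₁ * c₂) * b, ?_⟩
  · rw [map_mul, map_mul]
    exact (h₁.mul_left (Polynomial.C c₂ * Polynomial.C c₃)).trans (dvd_of_eq (by ring))
  · rw [map_mul, map_mul]
    exact (h₂.mul_left (Polynomial.C c₁ * Polynomial.C c₃)).trans (dvd_of_eq (by ring))
  · rw [map_mul Polynomial.C (c₁ * c₂) c₃, ← h₃]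
    ring

lemma exists_forall_evalEval_eq_zero_iff_and_simple {H : Polynomial (Polynomial ℝ)} (hH : H ≠ 0) :
    ∃ G : Polynomial (Polynomial ℝ), ∀ᶠ r in atTop, ∀ τ : ℝ,
      (H.evalEval r τ = 0 ↔ G.evalEval r τ = 0) ∧
      (G.evalEval r τ = 0 → G.derivative.evalEval r τ ≠ 0) := by
  obtain ⟨G, c, n, hc, ⟨u, hu⟩, ⟨v, hv⟩, a, b, hab⟩ := exists_squarefree_part hH
  refine ⟨G, ?_⟩
  filter_upwards [Polynomial.eventually_atTop_not_isRoot c hc] with r hr τ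
  have hu' := congrArg (Polynomial.evalEval r τ) hu
  have hv' := congrArg (Polynomial.evalEval r τ) hv
  have hab' := congrArg (Polynomial.evalEval r τ) hab
  simp only [Polynomial.evalEval_mul, Polynomial.evalEval_add, Polynomial.evalEval_pow,
    Polynomial.evalEval_C] at hu' hv' hab'
  refine ⟨⟨fun h ↦ ?_, fun h ↦ ?_⟩, fun h h' ↦ hr ?_⟩
  · rw [h, zero_mul] at hv'
    exact eq_zero_of_pow_eq_zero ((mul_eq_zero.mp hv').resolve_left hr)
  · rw [h, zero_mul] at hu'
    exact (mul_eq_zero.mp hu').resolve_left hr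
  · simpa [h, h'] using hab'.symm

end SquarefreePart

section ImplicitCurves

lemma exists_implicit_curve {F : ℝ × ℝ → ℝ} {a b F' : ℝ} (hF : ContDiffAt ℝ 1 F (a, b))
    (hF' : HasDerivAt (fun y ↦ F (a, y)) F' b) (h : F' ≠ 0) :
    ∃ (ψ : ℝ → ℝ) (ψ' : ℝ), ψ a = b ∧ HasDerivAt ψ ψ' a ∧
      ∀ᶠ x in nhds a, F (x, ψ x) = F (a, b) := by
  have hs := hF.hasStrictFDerivAt one_ne_zero
  set L := fderiv ℝ F (a, b)
  have hL : (L ∘L .inr ℝ ℝ ℝ) 1 = F' :=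
    (hs.hasFDerivAt.comp b (hasFDerivAt_prodMk_right a b)).hasDerivAt.unique hF'
  have hinv : (L ∘L .inr ℝ ℝ ℝ).IsInvertible :=
    ⟨ContinuousLinearEquiv.unitsEquivAut ℝ (Units.mk0 F' h), by ext; simp [hL]⟩
  exact ⟨hs.implicitFunctionOfProdDomain hinv, _,
    (hs.eventually_apply_eq_iff_implicitFunctionOfProdDomain hinv).self_of_nhds.mp rfl,
    (hs.hasStrictFDerivAt_implicitFunctionOfProdDomain hinv).hasFDerivAt.hasDerivAt,
    hs.eventually_apply_implicitFunctionOfProdDomain hinv⟩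

lemma contDiff_evalEval (G : Polynomial (Polynomial ℝ)) {n : WithTop ℕ∞} :
    ContDiff ℝ n fun q : ℝ × ℝ ↦ G.evalEval q.1 q.2 := by
  induction G using Polynomial.induction_on' with
  | add p q hp hq => simpa only [Polynomial.evalEval_add] using hp.add hq
  | monomial k a =>
    have ha : ContDiff ℝ n fun x : ℝ ↦ a.eval x := by
      simpa only [Polynomial.coe_aeval_eq_eval] using a.contDiff_aeval (𝕜 := ℝ) n
    simp only [← Polynomial.C_mul_X_pow_eq_monomial, Polynomial.evalEval_mul,
      Polynomial.evalEval_C, Polynomial.evalEval_pow, Polynomial.evalEval_X]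
    exact (ha.comp contDiff_fst).mul (contDiff_snd.pow k)

lemma hasDerivAt_evalEval (G : Polynomial (Polynomial ℝ)) (r τ : ℝ) :
    HasDerivAt (fun τ ↦ G.evalEval r τ) (G.derivative.evalEval r τ) τ := by
  have heval (H : Polynomial (Polynomial ℝ)) (τ : ℝ) :
      H.evalEval r τ = (H.map (Polynomial.evalRingHom r)).eval τ := by
    rw [← Polynomial.eval₂_evalRingHom, Polynomial.eval_map]
  simp only [heval, ← Polynomial.derivative_map]
  exact Polynomial.hasDerivAt _ _

lemma one_add_sq_mul_cos_two_mul_arctan (τ : ℝ) :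
    (1 + τ ^ 2) * Real.cos (2 * Real.arctan τ) = 1 - τ ^ 2 := by
  rw [Real.cos_two_mul, Real.cos_sq_arctan]
  field_simp
  ring

lemma one_add_sq_mul_sin_two_mul_arctan (τ : ℝ) :
    (1 + τ ^ 2) * Real.sin (2 * Real.arctan τ) = 2 * τ := by
  have hsin : Real.sin (Real.arctan τ) = τ * Real.cos (Real.arctan τ) := by
    conv_rhs => rw [← Real.tan_arctan τ, Real.arctan_tan (Real.neg_pi_div_two_lt_arctan τ)
      (Real.arctan_lt_pi_div_two τ)]
    rw [Real.tan_mul_cos (Real.cos_arctan_pos τ).ne']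
  have hcos := Real.cos_sq_arctan τ
  rw [eq_div_iff (by positivity)] at hcos
  rw [Real.sin_two_mul, hsin]
  linear_combination 2 * τ * hcos

lemma exists_evalEval_eq_one_add_sq_mul_coord (z : ℝ) (i : Fin 2) :
    ∃ H : Polynomial (Polynomial ℝ), ∀ r τ : ℝ,
      H.evalEval r τ = (1 + τ ^ 2) * polarEval r (z + 2 * Real.arctan τ) (X i) := by
  let rational (a b : ℝ) : Polynomial (Polynomial ℝ) := Polynomial.C Polynomial.X *
    (Polynomial.C (Polynomial.C a) * (1 - Polynomial.X ^ 2) +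
      Polynomial.C (Polynomial.C b) * (2 * Polynomial.X))
  have heval (a b r τ : ℝ) :
      (rational a b).evalEval r τ = r * (a * (1 - τ ^ 2) + b * (2 * τ)) := by
    simp [rational, Polynomial.evalEval]
  have hcos := one_add_sq_mul_cos_two_mul_arctan
  have hsin := one_add_sq_mul_sin_two_mul_arctan
  fin_cases i
  · refine ⟨rational (Real.cos z) (-Real.sin z), fun r τ ↦ ?_⟩
    rw [heval, ← hcos τ, ← hsin τ]
    simp only [polarEval, aeval_X, Real.cos_add, Fin.zero_eta, Matrix.cons_val]
    ring
  · refine ⟨rational (Real.sin z) (Real.cos z), fun r τ ↦ ?_⟩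
    rw [heval, ← hcos τ, ← hsin τ]
    simp only [polarEval, aeval_X, Real.sin_add, Fin.mk_one, Matrix.cons_val]
    ring

lemma exists_evalEval_eq_one_add_sq_pow_mul_polarEval (z : ℝ) (p : MvPolynomial (Fin 2) ℝ) :
    ∃ (n : ℕ) (H : Polynomial (Polynomial ℝ)), ∀ r τ : ℝ,
      H.evalEval r τ = (1 + τ ^ 2) ^ n * polarEval r (z + 2 * Real.arctan τ) p := by
  induction p using MvPolynomial.induction_on with
  | C a => exact ⟨0, Polynomial.C (Polynomial.C a), fun r τ ↦ by simp⟩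
  | add p q hp hq =>
    obtain ⟨n, P, hP⟩ := hp
    obtain ⟨m, Q, hQ⟩ := hq
    refine ⟨n + m, (1 + Polynomial.X ^ 2) ^ m * P + (1 + Polynomial.X ^ 2) ^ n * Q,
      fun r τ ↦ ?_⟩
    simp only [Polynomial.evalEval_mul, Polynomial.evalEval_add, Polynomial.evalEval_pow,
      Polynomial.evalEval_X, Polynomial.evalEval_one, hP, hQ, map_add]
    ring
  | mul_X p i hp =>
    obtain ⟨n, P, hP⟩ := hp
    obtain ⟨L, hL⟩ := exists_evalEval_eq_one_add_sq_mul_coord z i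
    refine ⟨n + 1, P * L, fun r τ ↦ ?_⟩
    rw [Polynomial.evalEval_mul, hP, hL, map_mul]
    ring

lemma add_two_mul_arctan_tan {z θ : ℝ} (hθ : θ ∈ Set.Ioo (z - Real.pi) (z + Real.pi)) :
    z + 2 * Real.arctan (Real.tan ((θ - z) / 2)) = θ := by
  rw [Real.arctan_tan (by linarith [hθ.1]) (by linarith [hθ.2])]
  ring

/- In the rational coordinate `τ = tan ((θ - z) / 2)` the zero set of `p` is that of a polynomial in
`(r, τ)`; its squarefree part has only simple zeros in `τ` for large `r`, so that the implicit
function theorem applies. -/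
lemma eventually_forall_exists_curve {p : MvPolynomial (Fin 2) ℝ} {z : ℝ}
    (hp : ∃ r, ∃ θ ∈ Set.Ioo (z - Real.pi) (z + Real.pi), polarEval r θ p ≠ 0) :
    ∀ᶠ s in atTop, ∀ θ ∈ Set.Ioo (z - Real.pi) (z + Real.pi), polarEval s θ p = 0 →
      ∃ (Θ : ℝ → ℝ) (Θ' : ℝ), Θ s = θ ∧ HasDerivAt Θ Θ' s ∧
        ∀ᶠ r in nhds s, polarEval r (Θ r) p = 0 := by
  obtain ⟨n, H, hH⟩ := exists_evalEval_eq_one_add_sq_pow_mul_polarEval z p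
  have hHp (r τ : ℝ) : H.evalEval r τ = 0 ↔ polarEval r (z + 2 * Real.arctan τ) p = 0 := by
    rw [hH, mul_eq_zero, or_iff_right (by positivity)]
  have hH0 : H ≠ 0 := by
    rintro rfl
    obtain ⟨r, θ, hθ, hne⟩ := hp
    have := (hHp r (Real.tan ((θ - z) / 2))).mp (by simp)
    rw [add_two_mul_arctan_tan hθ] at this
    exact hne this
  obtain ⟨G, hG⟩ := exists_forall_evalEval_eq_zero_iff_and_simple hH0
  obtain ⟨s₀, hs₀⟩ := eventually_atTop.mp hG
  filter_upwards [eventually_gt_atTop s₀] with s hs θ hθ hpθ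
  have hGθ : G.evalEval s (Real.tan ((θ - z) / 2)) = 0 := by
    rw [← (hs₀ s hs.le _).1, hHp, add_two_mul_arctan_tan hθ, hpθ]
  obtain ⟨ψ, ψ', hψs, hψ, hGψ⟩ := exists_implicit_curve (contDiff_evalEval G).contDiffAt
    (hasDerivAt_evalEval G s _) ((hs₀ s hs.le _).2 hGθ)
  refine ⟨fun r ↦ z + 2 * Real.arctan (ψ r), _, ?_, (hψ.arctan.const_mul 2).const_add z, ?_⟩
  · simp only [hψs, add_two_mul_arctan_tan hθ]
  · filter_upwards [hGψ, eventually_gt_nhds hs] with r hr hrs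
    exact (hHp r _).mp ((hs₀ r hrs.le _).1.mpr (hr.trans hGθ))

end ImplicitCurves

section SectorsWithoutLevelSets

variable {g : MvPolynomial (Fin 2) ℝ}

/- The derivative of `g` along a curve `D g = 0`, parametrised by `r`, is `E g / r`. -/
lemma exists_gt_polarEval_lt_of_eulerDeriv_neg {s θ a b : ℝ} (hs : 0 < s) (hθ : θ ∈ Set.Ioo a b)
    (hE : polarEval s θ (eulerDeriv g) < 0)
    (hcurve : ∃ (Θ : ℝ → ℝ) (Θ' : ℝ), Θ s = θ ∧ HasDerivAt Θ Θ' s ∧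
      ∀ᶠ r in nhds s, polarEval r (Θ r) (angularDeriv g) = 0) :
    ∃ r > s, ∃ θ' ∈ Set.Ioo a b, polarEval r θ' (angularDeriv g) = 0 ∧
      polarEval r θ' (eulerDeriv g) < 0 ∧ polarEval r θ' g < polarEval s θ g := by
  obtain ⟨Θ, Θ', rfl, hΘ, hD⟩ := hcurve
  have hderiv : HasDerivAt (fun r ↦ polarEval r (Θ r) g)
      (polarEval s (Θ s) (eulerDeriv g) / s) s := by
    refine (hasDerivAt_polarEval_curve g (hasDerivAt_id s) hΘ hs.ne').congr_deriv ?_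
    rw [id_eq, hD.self_of_nhds]
    ring
  have hE' : ∀ᶠ r in nhds s, polarEval r (Θ r) (eulerDeriv g) < 0 :=
    ((hasDerivAt_polarEval_curve (eulerDeriv g) (hasDerivAt_id s) hΘ
      hs.ne').continuousAt).eventually_lt_const hE
  have hsector : ∀ᶠ r in nhds s, Θ r ∈ Set.Ioo a b := hΘ.continuousAt (isOpen_Ioo.mem_nhds hθ)
  have hslope := (hasDerivAt_iff_tendsto_slope.mp hderiv).eventually_lt_const
    (div_neg_of_neg_of_pos hE hs)
  have hslope_right :=
    hslope.filter_mono (nhdsWithin_mono s (s := Set.Ioi s) fun _ h ↦ (ne_of_lt h).symm)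
  obtain ⟨r, ⟨⟨hDr, hEr, hΘr⟩, hlt⟩, hsr⟩ :=
    (((hD.and (hE'.and hsector)).filter_mono nhdsWithin_le_nhds).and hslope_right |>.and
      (self_mem_nhdsWithin (s := Set.Ioi s))).exists
  refine ⟨r, hsr, Θ r, hΘr, hDr, hEr, ?_⟩
  rw [slope_def_field, div_lt_iff₀ (sub_pos.mpr hsr), zero_mul] at hlt
  exact sub_neg.mp hlt

lemma exists_isMinOn_polarEval_of_coercive {a b X : ℝ} {S : Set (ℝ × ℝ)} (hS : IsClosed S)
    (hne : S.Nonempty) (hsub : S ⊆ Set.Ici X ×ˢ Set.Icc a b)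
    (hg : ∀ c, ∀ᶠ r in atTop, ∀ θ ∈ Set.Icc a b, c < polarEval r θ g) :
    ∃ q ∈ S, IsMinOn (fun q : ℝ × ℝ ↦ polarEval q.1 q.2 g) S q := by
  obtain ⟨q₀, hq₀⟩ := hne
  obtain ⟨Y, hY⟩ := eventually_atTop.mp (hg (polarEval q₀.1 q₀.2 g))
  refine (continuous_polarEval g continuous_fst continuous_snd).continuousOn.exists_isMinOn' hS
    hq₀ ?_
  rw [eventually_inf_principal]
  filter_upwards [(isCompact_Icc.prod isCompact_Icc : IsCompact
    (Set.Icc X Y ×ˢ Set.Icc a b)).compl_mem_cocompact] with q hq hqS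
  obtain ⟨hX, hθ⟩ := hsub hqS
  exact (hY q.1 (le_of_not_ge fun h ↦ hq ⟨⟨hX, h⟩, hθ⟩) q.2 hθ).le

/- Otherwise `g` attains a minimum on `{D g = 0, E g ≤ 0}` in the sector; following the curve
`D g = 0` outwards from the minimum decreases `g`. -/
lemma eventually_forall_eulerDeriv_pos_of_coercive {z ε : ℝ} (hε : 0 < ε) (hεπ : ε < Real.pi)
    (hg : ∀ c, ∀ᶠ r in atTop, ∀ θ ∈ Set.Icc (z - ε) (z + ε), c < polarEval r θ g)
    (hcrit : ∀ᶠ r in atTop, ∀ θ, polarEval r θ (angularDeriv g) = 0 →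
      polarEval r θ (eulerDeriv g) ≠ 0)
    (hedge : ∀ᶠ r in atTop, ∀ θ ∈ ({z - ε, z + ε} : Set ℝ), polarEval r θ (angularDeriv g) ≠ 0) :
    ∀ᶠ r in atTop, ∀ θ ∈ Set.Icc (z - ε) (z + ε),
      polarEval r θ (angularDeriv g) = 0 → 0 < polarEval r θ (eulerDeriv g) := by
  have hcurve : ∀ᶠ s in atTop, ∀ θ ∈ Set.Ioo (z - Real.pi) (z + Real.pi),
      polarEval s θ (angularDeriv g) = 0 → ∃ (Θ : ℝ → ℝ) (Θ' : ℝ), Θ s = θ ∧ HasDerivAt Θ Θ' s ∧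
        ∀ᶠ r in nhds s, polarEval r (Θ r) (angularDeriv g) = 0 := by
    obtain ⟨r, hr⟩ := hedge.exists
    exact eventually_forall_exists_curve
      ⟨r, z + ε, ⟨by linarith, by linarith⟩, hr _ (by simp)⟩
  obtain ⟨X, hX⟩ := eventually_atTop.mp
    (((hcrit.and hedge).and hcurve).and (eventually_gt_atTop 0))
  rw [eventually_atTop]
  refine ⟨X, fun r₁ hr₁ θ₁ hθ₁ hD₁ ↦ ?_⟩
  by_contra! hE₁
  let S : Set (ℝ × ℝ) := {q | (q.1 ∈ Set.Ici X ∧ q.2 ∈ Set.Icc (z - ε) (z + ε)) ∧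
    polarEval q.1 q.2 (angularDeriv g) = 0 ∧ polarEval q.1 q.2 (eulerDeriv g) ≤ 0}
  have hcont (p : MvPolynomial (Fin 2) ℝ) : Continuous fun q : ℝ × ℝ ↦ polarEval q.1 q.2 p :=
    continuous_polarEval p continuous_fst continuous_snd
  have hS : IsClosed S := (isClosed_Ici.prod isClosed_Icc).inter
    ((isClosed_eq (hcont _) continuous_const).inter (isClosed_le (hcont _) continuous_const))
  obtain ⟨⟨s, θ⟩, ⟨⟨hs, hθ⟩, hD, hE⟩, hmin⟩ := exists_isMinOn_polarEval_of_coercive hS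
    ⟨(r₁, θ₁), ⟨hr₁, hθ₁⟩, hD₁, hE₁⟩ (fun _ hq ↦ hq.1) hg
  obtain ⟨⟨⟨hcrit_s, hedge_s⟩, hcurve_s⟩, hs0⟩ := hX s hs
  have hθ' : θ ∈ Set.Ioo (z - ε) (z + ε) :=
    ⟨lt_of_le_of_ne hθ.1 fun h ↦ hedge_s _ (.inl h.symm) hD,
      lt_of_le_of_ne hθ.2 fun h ↦ hedge_s _ (.inr h) hD⟩
  obtain ⟨r, hr, θ', hθ'', hDr, hEr, hlt⟩ := exists_gt_polarEval_lt_of_eulerDeriv_neg hs0 hθ'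
    (lt_of_le_of_ne hE (hcrit_s θ hD))
    (hcurve_s θ ⟨by linarith [hθ.1], by linarith [hθ.2]⟩ hD)
  have hmem : (r, θ') ∈ S :=
    ⟨⟨(hs.trans hr.le : X ≤ r), Set.Ioo_subset_Icc_self hθ''⟩, hDr, hEr.le⟩
  exact (hmin hmem).not_gt hlt

lemma eventually_forall_angularPart_mul_eulerDeriv_pos_of_not_dirAtInfinity
    {f : MvPolynomial (Fin 2) ℝ} (hf : 1 ≤ f.totalDegree) {z ε : ℝ}
    (hε : IsolatesZero (angularPart f) z ε)
    (hcrit : ∀ᶠ r in atTop, ∀ θ, polarEval r θ (angularDeriv f) = 0 →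
      polarEval r θ (eulerDeriv f) ≠ 0)
    (hz : ¬ DirAtInfinity f (Real.cos z) (Real.sin z)) :
    ∀ᶠ r in atTop, ∀ θ ∈ Set.Icc (z - ε) (z + ε), polarEval r θ (angularDeriv f) = 0 →
      0 < angularPart f (z + ε) * polarEval r θ (eulerDeriv f) := by
  have hne : z - ε ≠ z ∧ z + ε ≠ z := by simp [hε.pos.ne']
  set σ := angularPart f (z + ε)
  have hσ : σ ≠ 0 := hε.ne_zero hε.right_mem hne.2
  have hcoercive (c : ℝ) :
      ∀ᶠ r in atTop, ∀ θ ∈ Set.Icc (z - ε) (z + ε), c < polarEval r θ (σ • f) := by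
    filter_upwards [eventually_forall_mul_sub_pos_of_not_dirAtInfinity hf hε.pos
      (fun θ ↦ hε.ne_zero) hz (c / σ)] with r hr θ hθ
    have hpos := hr θ hθ
    rw [mul_sub, mul_div_cancel₀ _ hσ] at hpos
    simpa using hpos
  have hedge : ∀ᶠ r in atTop, ∀ θ ∈ ({z - ε, z + ε} : Set ℝ),
      polarEval r θ (angularDeriv f) ≠ 0 := by
    have hderiv : ∀ θ ∈ ({z - ε, z + ε} : Set ℝ), deriv (angularPart f) θ ≠ 0 := by
      rintro θ (rfl | rfl)
      exacts [hε.deriv_ne_zero hε.left_mem hne.1, hε.deriv_ne_zero hε.right_mem hne.2]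
    filter_upwards [eventually_forall_deriv_angularPart_mul_angularDeriv_pos
      (Set.toFinite _).isCompact hderiv] with r hr θ hθ
    exact right_ne_zero_of_mul (hr θ hθ).ne'
  simpa [hσ] using eventually_forall_eulerDeriv_pos_of_coercive (g := σ • f) hε.pos hε.lt_pi
    hcoercive (by simpa [hσ] using hcrit) (by simpa [hσ] using hedge)

end SectorsWithoutLevelSets

section WindingNumbers

lemma hasDerivAt_of_exp_eq {L W : ℝ → ℂ} {W' : ℂ} {t : ℝ} (hL : ContinuousAt L t)
    (hLW : ∀ x, Complex.exp (L x) = W x) (hW : HasDerivAt W W' t) :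
    HasDerivAt L (W' / W t) t := by
  have hne : W t ≠ 0 := hLW t ▸ Complex.exp_ne_zero _
  have hquot : W t / W t ∈ Complex.slitPlane := by simp [hne]
  have hlog : HasDerivAt (fun x ↦ L t + Complex.log (W x / W t)) (W' / W t) t := by
    refine (((hW.div_const (W t)).clog_real hquot).const_add (L t)).congr_deriv ?_
    rw [div_self hne, div_one]
  have him : Tendsto (fun x ↦ (L x - L t).im) (nhds t) (nhds 0) := by
    have hcont : ContinuousAt (fun x ↦ (L x - L t).im) t := by fun_prop
    simpa only [sub_self, Complex.zero_im] using hcont.tendsto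
  refine hlog.congr_of_eventuallyEq ?_
  filter_upwards [him (Ioo_mem_nhds (neg_lt_zero.mpr Real.pi_pos) Real.pi_pos)] with x hx
  rw [← hLW x, ← hLW t, ← Complex.exp_sub, Complex.log_exp hx.1 hx.2.le]
  ring

lemma exists_forall_eq_add_of_exp_eq {X : Type*} [TopologicalSpace X] [PreconnectedSpace X]
    [Nonempty X] {L L' : X → ℂ} (hL : Continuous L) (hL' : Continuous L')
    (h : ∀ x, Complex.exp (L' x) = Complex.exp (L x)) :
    ∃ n : ℤ, ∀ x, L' x = L x + n * (2 * Real.pi * Complex.I) := by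
  obtain ⟨x₀⟩ := ‹Nonempty X›
  obtain ⟨n, hn⟩ := Complex.exp_eq_exp_iff_exists_int.mp (h x₀)
  refine ⟨n, fun x ↦ congrFun (Complex.isCoveringMap_exp.eq_of_comp_eq hL'
    (hL.add continuous_const) (funext fun y ↦ Subtype.ext ?_) x₀ hn) x⟩
  simpa [Complex.exp_add, Complex.exp_int_mul_two_pi_mul_I] using h y

lemma integral_winding_eq_im_sub_im {u v : ℝ → ℝ} {L : ℝ → ℂ} (hu : ContDiff ℝ 1 u)
    (hv : ContDiff ℝ 1 v) (hL : Continuous L) (hLuv : ∀ t, Complex.exp (L t) = ⟨u t, v t⟩)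
    (a b : ℝ) :
    ∫ t in a..b, (u t * deriv v t - v t * deriv u t) / (u t ^ 2 + v t ^ 2) =
      (L b).im - (L a).im := by
  have hpos (t : ℝ) : u t ^ 2 + v t ^ 2 ≠ 0 := by
    have h := Complex.normSq_pos.mpr (Complex.exp_ne_zero (L t))
    rw [hLuv, Complex.normSq_mk] at h
    linarith
  have hderiv (t : ℝ) : HasDerivAt (fun t ↦ (L t).im)
      ((u t * deriv v t - v t * deriv u t) / (u t ^ 2 + v t ^ 2)) t := by
    have hW : HasDerivAt (fun t ↦ (⟨u t, v t⟩ : ℂ)) ⟨deriv u t, deriv v t⟩ t := by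
      simp only [Complex.mk_eq_add_mul_I]
      exact ((hu.differentiable one_ne_zero t).hasDerivAt.ofReal_comp).add
        ((hv.differentiable one_ne_zero t).hasDerivAt.ofReal_comp.mul_const _)
    refine (Complex.imCLM.hasFDerivAt.comp_hasDerivAt t
      (hasDerivAt_of_exp_eq hL.continuousAt hLuv hW)).congr_deriv ?_
    rw [Complex.imCLM_apply, Complex.div_im, Complex.normSq_mk, ← sub_div, ← sq, ← sq]
    ring
  refine intervalIntegral.integral_eq_sub_of_hasDerivAt (fun t _ ↦ hderiv t)
    (Continuous.intervalIntegrable ?_ _ _)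
  have hu' := hu.continuous_deriv le_rfl
  have hv' := hv.continuous_deriv le_rfl
  exact ((hu.continuous.mul hv').sub (hv.continuous.mul hu')).div
    ((hu.continuous.pow 2).add (hv.continuous.pow 2)) hpos

lemma exists_continuous_exp_eq {X : Type*} [TopologicalSpace X] [LocallyPathConnectedSpace X]
    [SimplyConnectedSpace X] {w : X → ℂ} (hw : Continuous w) (hw0 : ∀ x, w x ≠ 0) :
    ∃ L : X → ℂ, Continuous L ∧ ∀ x, Complex.exp (L x) = w x := by
  obtain ⟨x₀⟩ := (inferInstance : Nonempty X)
  obtain ⟨L, ⟨-, hL⟩, -⟩ := Complex.isCoveringMapOn_exp.existsUnique_continuousMap_lifts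
    ⟨w, hw⟩ (Complex.exp_log (hw0 x₀)) hw0
  exact ⟨L, L.continuous, congrFun hL⟩

/-- `B (r, θ)` is a continuous determination, for `R ≤ r`, of the angle from the radial direction
to the gradient of `f` at the point with polar coordinates `(r, θ)`. The gradient has coordinates
`(E f / r, D f / r)` in the moving frame of polar coordinates, where `E = eulerDeriv` and
`D = angularDeriv`. -/
structure IsGradAngle (f : MvPolynomial (Fin 2) ℝ) (R : ℝ) (B : ℝ × ℝ → ℝ) : Prop where
  continuous : Continuous B
  exists_polar : ∀ r ≥ R, ∀ θ, ∃ ρ > 0, polarEval r θ (eulerDeriv f) = ρ * Real.cos (B (r, θ)) ∧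
    polarEval r θ (angularDeriv f) = ρ * Real.sin (B (r, θ))

variable {f : MvPolynomial (Fin 2) ℝ} {R : ℝ}

lemma isGradAngle_of_exp_eq (hR : 0 < R) {L : ℝ × ℝ → ℂ} (hL : Continuous L)
    (hLf : ∀ r ≥ R, ∀ θ, Complex.exp (L (r, θ)) =
      ⟨polarEval r θ (pderiv 0 f), polarEval r θ (pderiv 1 f)⟩) :
    IsGradAngle f R fun q ↦ (L q).im - q.2 := by
  refine ⟨by fun_prop, fun r hr θ ↦ ⟨r * Real.exp (L (r, θ)).re,
    mul_pos (hR.trans_le hr) (Real.exp_pos _), ?_⟩⟩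
  have hre := congrArg Complex.re (hLf r hr θ)
  have him := congrArg Complex.im (hLf r hr θ)
  simp only [Complex.exp_re, Complex.exp_im] at hre him
  rw [polarEval_eulerDeriv, polarEval_angularDeriv, Real.cos_sub, Real.sin_sub, ← hre, ← him]
  constructor <;> ring

lemma gradIndex_eq_of_exp_eq {L : ℝ → ℂ} (hL : Continuous L)
    (hLf : ∀ θ, Complex.exp (L θ) = ⟨polarEval R θ (pderiv 0 f), polarEval R θ (pderiv 1 f)⟩) :
    gradIndex f R = ((L (2 * Real.pi)).im - (L 0).im) / (2 * Real.pi) := by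
  have hu : uFun f R = fun θ ↦ polarEval R θ (pderiv 0 f) :=
    funext fun θ ↦ by rw [uFun, polarEval_eq_evalP]
  have hv : vFun f R = fun θ ↦ polarEval R θ (pderiv 1 f) :=
    funext fun θ ↦ by rw [vFun, polarEval_eq_evalP]
  rw [gradIndex, hu, hv, integral_winding_eq_im_sub_im (contDiff_polarEval _ R)
    (contDiff_polarEval _ R) hL hLf, one_div_mul_eq_div]

lemma exists_isGradAngle (hR : 0 < R)
    (hcrit : ∀ r ≥ R, ∀ θ, ¬ IsCriticalPt f (r * Real.cos θ, r * Real.sin θ))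
    {i : ℤ} (hi : i = gradIndex f R) :
    ∃ B, IsGradAngle f R B ∧ ∀ r θ, B (r, θ + 2 * Real.pi) = B (r, θ) + 2 * Real.pi * (i - 1) := by
  let w : ℝ × ℝ → ℂ := fun q ↦
    ⟨polarEval (max R q.1) q.2 (pderiv 0 f), polarEval (max R q.1) q.2 (pderiv 1 f)⟩
  have hw : Continuous w := by
    have hcont (p : MvPolynomial (Fin 2) ℝ) :
        Continuous fun q : ℝ × ℝ ↦ polarEval (max R q.1) q.2 p :=
      continuous_polarEval p (by fun_prop) continuous_snd
    exact Complex.equivRealProdCLM.symm.continuous.comp ((hcont _).prodMk (hcont _))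
  have hw0 (q : ℝ × ℝ) : w q ≠ 0 := fun h ↦ hcrit (max R q.1) (le_max_left _ _) q.2 <| by
    rw [IsCriticalPt, ← polarEval_eq_evalP, ← polarEval_eq_evalP]
    exact ⟨congrArg Complex.re h, congrArg Complex.im h⟩
  obtain ⟨L, hL, hLw⟩ := exists_continuous_exp_eq hw hw0
  obtain ⟨n, hn⟩ := exists_forall_eq_add_of_exp_eq hL
    (L' := fun q ↦ L (q.1, q.2 + 2 * Real.pi)) (by fun_prop)
    fun q ↦ by simp only [hLw, w, polarEval_add_two_pi]
  have hn_im (r θ : ℝ) : (L (r, θ + 2 * Real.pi)).im = (L (r, θ)).im + 2 * Real.pi * n := by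
    rw [hn (r, θ)]
    simp [mul_comm]
  have hni : n = i := by
    have hindex := gradIndex_eq_of_exp_eq (f := f) (R := R) (hL.comp (Continuous.prodMk_right R))
      fun θ ↦ by simp only [Function.comp_apply, hLw, w, max_self]
    have h0 := hn_im R 0
    rw [zero_add] at h0
    rw [Function.comp_apply, Function.comp_apply, h0, add_sub_cancel_left,
      mul_div_cancel_left₀ _ Real.two_pi_pos.ne', ← hi] at hindex
    exact_mod_cast hindex.symm
  refine ⟨_, isGradAngle_of_exp_eq hR hL fun r hr θ ↦ ?_, fun r θ ↦ ?_⟩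
  · rw [hLw]
    simp only [w, max_eq_right hr]
  · rw [hn_im, hni]
    ring

namespace IsGradAngle

variable {B : ℝ × ℝ → ℝ} {r θ : ℝ}

lemma mul_eulerDeriv_pos_iff (hB : IsGradAngle f R B) (hr : R ≤ r) (c : ℝ) :
    0 < c * polarEval r θ (eulerDeriv f) ↔ 0 < c * Real.cos (B (r, θ)) := by
  obtain ⟨ρ, hρ, hcos, -⟩ := hB.exists_polar r hr θ
  rw [hcos, mul_left_comm, mul_pos_iff_of_pos_left hρ]

lemma mul_angularDeriv_pos_iff (hB : IsGradAngle f R B) (hr : R ≤ r) (c : ℝ) :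
    0 < c * polarEval r θ (angularDeriv f) ↔ 0 < c * Real.sin (B (r, θ)) := by
  obtain ⟨ρ, hρ, -, hsin⟩ := hB.exists_polar r hr θ
  rw [hsin, mul_left_comm, mul_pos_iff_of_pos_left hρ]

lemma angularDeriv_eq_zero_iff (hB : IsGradAngle f R B) (hr : R ≤ r) :
    polarEval r θ (angularDeriv f) = 0 ↔ Real.sin (B (r, θ)) = 0 := by
  obtain ⟨ρ, hρ, -, hsin⟩ := hB.exists_polar r hr θ
  rw [hsin, mul_eq_zero, or_iff_right hρ.ne']

lemma eulerDeriv_ne_zero (hB : IsGradAngle f R B) (hr : R ≤ r)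
    (hD : polarEval r θ (angularDeriv f) = 0) : polarEval r θ (eulerDeriv f) ≠ 0 := by
  rw [hB.angularDeriv_eq_zero_iff hr] at hD
  obtain ⟨ρ, hρ, hcos, -⟩ := hB.exists_polar r hr θ
  have hcos_ne : Real.cos (B (r, θ)) ≠ 0 := fun h ↦ by
    simpa [hD, h] using Real.sin_sq_add_cos_sq (B (r, θ))
  exact hcos ▸ mul_ne_zero hρ.ne' hcos_ne

end IsGradAngle

end WindingNumbers

section Levels

lemma abs_sub_pi_mul_lt_of_cos_ne_zero {X : Type*} [TopologicalSpace X] {s : Set X} {g : X → ℝ}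
    (hs : IsPreconnected s) (hg : ContinuousOn g s) (hcos : ∀ x ∈ s, Real.cos (g x) ≠ 0) {n : ℤ}
    {x y : X} (hx : x ∈ s) (hy : y ∈ s) (hxn : |g x - Real.pi * n| < Real.pi / 2) :
    |g y - Real.pi * n| < Real.pi / 2 := by
  have h0 : ∀ w ∈ s, (Real.pi / 2) ^ 2 - (g w - Real.pi * n) ^ 2 ≠ 0 := fun w hw h ↦ by
    refine hcos w hw (Real.cos_eq_zero_iff.mpr ?_)
    rcases sq_eq_sq_iff_eq_or_eq_neg.mp (sub_eq_zero.mp h) with h | h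
    · exact ⟨n, by linarith⟩
    · exact ⟨n - 1, by push_cast; linarith⟩
  have hpos := mul_pos_of_continuousOn_of_ne_zero hs (by fun_prop) h0 hx hy
  rw [← sq_lt_sq₀ (abs_nonneg _) (by positivity), sq_abs] at hxn ⊢
  exact sub_pos.mp (pos_of_mul_pos_right hpos (sub_pos.mpr hxn).le)

lemma exists_abs_sub_pi_mul_lt {x : ℝ} (hx : Real.cos x ≠ 0) :
    ∃ n : ℤ, |x - Real.pi * n| < Real.pi / 2 := by
  have hpi := Real.pi_pos
  have hle := Int.floor_le (x / Real.pi + 1 / 2)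
  have hlt := Int.lt_floor_add_one (x / Real.pi + 1 / 2)
  set n := ⌊x / Real.pi + 1 / 2⌋
  have hdiv : x = Real.pi * (x / Real.pi) := by field_simp
  refine ⟨n, abs_lt.mpr ⟨lt_of_le_of_ne (by nlinarith) fun h ↦ hx ?_, by nlinarith⟩⟩
  exact Real.cos_eq_zero_iff.mpr ⟨n - 1, by push_cast; linarith⟩

lemma sin_two_mul_mul_sub_pi_mul_pos {x : ℝ} {n : ℤ} (h : |x - Real.pi * n| < Real.pi / 2)
    (hx : Real.sin (2 * x) ≠ 0) : 0 < Real.sin (2 * x) * (x - Real.pi * n) := by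
  set y := x - Real.pi * n with hy
  have hsin : Real.sin (2 * x) = Real.sin (2 * y) := by
    rw [← Real.sin_add_int_mul_two_pi (2 * y) n, hy]
    ring_nf
  rw [hsin] at hx ⊢
  obtain ⟨hl, hr⟩ := abs_lt.mp h
  rcases lt_trichotomy y 0 with h0 | h0 | h0
  · exact mul_pos_of_neg_of_neg
      (Real.sin_neg_of_neg_of_neg_pi_lt (by linarith) (by linarith)) h0
  · simp [h0] at hx
  · exact mul_pos (Real.sin_pos_of_pos_of_lt_pi (by linarith) (by linarith)) h0

/-- Along the ray of angle `θ`, the angle `B` is eventually within `π / 2` of `π n`. -/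
def HasLevel (B : ℝ × ℝ → ℝ) (θ : ℝ) (n : ℤ) : Prop :=
  ∀ᶠ r in atTop, |B (r, θ) - Real.pi * n| < Real.pi / 2

lemma HasLevel.unique {B : ℝ × ℝ → ℝ} {θ : ℝ} {m n : ℤ} (hm : HasLevel B θ m)
    (hn : HasLevel B θ n) : m = n := by
  obtain ⟨r, hrm, hrn⟩ := (hm.and hn).exists
  have habs : Real.pi * |(m - n : ℝ)| < Real.pi * 1 := by
    rw [← abs_of_pos Real.pi_pos, ← abs_mul, abs_of_pos Real.pi_pos, abs_lt]
    obtain ⟨hml, hmr⟩ := abs_lt.mp hrm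
    obtain ⟨hnl, hnr⟩ := abs_lt.mp hrn
    constructor <;> linarith
  have hlt : |m - n| < 1 := by exact_mod_cast lt_of_mul_lt_mul_left habs Real.pi_pos.le
  exact sub_eq_zero.mp (Int.abs_lt_one_iff.mp hlt)

lemma HasLevel.add_pi_mul {B : ℝ × ℝ → ℝ} {θ θ' : ℝ} {n k : ℤ} (h : HasLevel B θ n)
    (hB : ∀ r, B (r, θ') = B (r, θ) + Real.pi * k) : HasLevel B θ' (n + k) := by
  filter_upwards [h] with r hr
  rw [hB]
  convert! hr using 2
  push_cast
  ring

variable {f : MvPolynomial (Fin 2) ℝ} {R : ℝ} {B : ℝ × ℝ → ℝ}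

namespace IsGradAngle

lemma eventually_forall_cos_ne_zero (hB : IsGradAngle f R B) (hf : 1 ≤ f.totalDegree) {K : Set ℝ}
    (hK : IsCompact K) (h : ∀ θ ∈ K, angularPart f θ ≠ 0) :
    ∀ᶠ r in atTop, ∀ θ ∈ K, Real.cos (B (r, θ)) ≠ 0 := by
  filter_upwards [eventually_forall_angularPart_mul_eulerDeriv_pos hf hK h,
    eventually_ge_atTop R] with r hr hRr θ hθ
  exact right_ne_zero_of_mul ((hB.mul_eulerDeriv_pos_iff hRr _).mp (hr θ hθ)).ne'

lemma exists_hasLevel (hB : IsGradAngle f R B) (hf : 1 ≤ f.totalDegree) {θ : ℝ}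
    (h : angularPart f θ ≠ 0) : ∃ n, HasLevel B θ n := by
  obtain ⟨r₀, hcos⟩ := eventually_atTop.mp <|
    hB.eventually_forall_cos_ne_zero hf isCompact_singleton (by simpa using h)
  simp only [Set.mem_singleton_iff, forall_eq] at hcos
  obtain ⟨n, hn⟩ := exists_abs_sub_pi_mul_lt (hcos r₀ le_rfl)
  have hcont : ContinuousOn (fun r ↦ B (r, θ)) (Set.Ici r₀) :=
    (hB.continuous.comp (Continuous.prodMk_left θ)).continuousOn
  exact ⟨n, eventually_atTop.mpr ⟨r₀, fun r hr ↦
    abs_sub_pi_mul_lt_of_cos_ne_zero isPreconnected_Ici hcont hcos Set.self_mem_Ici hr hn⟩⟩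

lemma hasLevel_of_forall_angularPart_ne_zero (hB : IsGradAngle f R B) (hf : 1 ≤ f.totalDegree)
    {α β : ℝ} (h : ∀ θ ∈ Set.uIcc α β, angularPart f θ ≠ 0) {n : ℤ} (hα : HasLevel B α n) :
    HasLevel B β n := by
  filter_upwards [hα, hB.eventually_forall_cos_ne_zero hf isCompact_uIcc h] with r hr hcos
  exact abs_sub_pi_mul_lt_of_cos_ne_zero isPreconnected_uIcc
    (hB.continuous.comp (Continuous.prodMk_right r)).continuousOn hcos Set.left_mem_uIcc
    Set.right_mem_uIcc hr

lemma eventually_mul_deriv_mul_sub_pos (hB : IsGradAngle f R B) (hf : 1 ≤ f.totalDegree) {θ : ℝ}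
    (h : angularPart f θ * deriv (angularPart f) θ ≠ 0) {n : ℤ} (hn : HasLevel B θ n) :
    ∀ᶠ r in atTop,
      0 < angularPart f θ * deriv (angularPart f) θ * (B (r, θ) - Real.pi * n) := by
  filter_upwards [hn, eventually_ge_atTop R,
    eventually_forall_angularPart_mul_eulerDeriv_pos hf (isCompact_singleton (x := θ))
      (by simpa using left_ne_zero_of_mul h),
    eventually_forall_deriv_angularPart_mul_angularDeriv_pos (isCompact_singleton (x := θ))
      (by simpa using right_ne_zero_of_mul h)] with r hr hRr hE hD
  have hcos := (hB.mul_eulerDeriv_pos_iff hRr _).mp (hE θ rfl)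
  have hsin := (hB.mul_angularDeriv_pos_iff hRr _).mp (hD θ rfl)
  have hsin_two : 0 < angularPart f θ * deriv (angularPart f) θ * Real.sin (2 * B (r, θ)) := by
    rw [Real.sin_two_mul]
    linear_combination 2 * mul_pos hcos hsin
  have hlevel := sin_two_mul_mul_sub_pi_mul_pos hr (right_ne_zero_of_mul hsin_two.ne')
  refine pos_of_mul_pos_left (b := Real.sin (2 * B (r, θ)) ^ 2) ?_ (sq_nonneg _)
  linear_combination mul_pos hsin_two hlevel

end IsGradAngle

end Levels

section Jumps

variable {f : MvPolynomial (Fin 2) ℝ} {R : ℝ} {B : ℝ × ℝ → ℝ} {z ε : ℝ} {a b : ℤ}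

lemma eventually_isolatesZero_angularPart (hf : 1 ≤ f.totalDegree) (hz : angularPart f z = 0) :
    ∀ᶠ ε in nhdsWithin 0 (Set.Ioi 0), IsolatesZero (angularPart f) z ε :=
  eventually_isolatesZero (analyticAt_polarEval _ 1 z) hz
    (analyticOrderAt_angularPart (ne_zero_of_one_le_totalDegree hf) z ▸ ENat.natCast_ne_top _)

namespace IsGradAngle

/- Near an isolated zero `z`, the angle `B` ends above the multiple `π b` of `π` to the right of
`z` and below the multiple `π a` to the left, by the sign of `φ φ'`. -/
lemma eventually_forall_exists_eq_pi_mul (hB : IsGradAngle f R B) (hf : 1 ≤ f.totalDegree)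
    (hε : IsolatesZero (angularPart f) z ε) (ha : HasLevel B (z - ε) a)
    (hb : HasLevel B (z + ε) b) :
    ∀ᶠ r in atTop, ∀ k ∈ Finset.Icc a b, ∃ θ ∈ Set.Icc (z - ε) (z + ε),
      B (r, θ) = Real.pi * k := by
  have hleft : angularPart f (z - ε) * deriv (angularPart f) (z - ε) < 0 := by
    have := hε.mul_deriv_pos _ hε.left_mem (by simp [hε.pos.ne'])
    rw [sub_sub_cancel_left] at this
    exact neg_of_mul_pos_right this (neg_nonpos.mpr hε.pos.le)
  have hright : 0 < angularPart f (z + ε) * deriv (angularPart f) (z + ε) := by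
    have := hε.mul_deriv_pos _ hε.right_mem (by simp [hε.pos.ne'])
    rw [add_sub_cancel_left] at this
    exact pos_of_mul_pos_right this hε.pos.le
  filter_upwards [hB.eventually_mul_deriv_mul_sub_pos hf hleft.ne ha,
    hB.eventually_mul_deriv_mul_sub_pos hf hright.ne' hb] with r hra hrb k hk
  obtain ⟨hak, hkb⟩ := Finset.mem_Icc.mp hk
  have hlow : B (r, z - ε) < Real.pi * a := sub_neg.mp (neg_of_mul_pos_right hra hleft.le)
  have hhigh : Real.pi * b < B (r, z + ε) := sub_pos.mp (pos_of_mul_pos_right hrb hright.le)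
  have hpak : Real.pi * a ≤ Real.pi * k := by gcongr
  have hpkb : Real.pi * k ≤ Real.pi * b := by gcongr
  exact intermediate_value_Icc (f := fun θ ↦ B (r, θ)) (by linarith [hε.pos])
    (hB.continuous.comp (Continuous.prodMk_right r)).continuousOn
    ⟨hlow.le.trans hpak, hpkb.trans hhigh.le⟩

/- The angular derivative of `f` vanishes wherever the angle `B` is a multiple of `π`, hence at
`b - a + 1` points of `[z - ε, z + ε]`; Rolle's theorem bounds their number. -/
lemma sub_le_of_iteratedDeriv_ne_zero (hB : IsGradAngle f R B) (hf : 1 ≤ f.totalDegree)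
    (hε : IsolatesZero (angularPart f) z ε) {k : ℕ}
    (hk : ∀ θ ∈ Set.Icc (z - ε) (z + ε), iteratedDeriv (k + 1) (angularPart f) θ ≠ 0)
    (ha : HasLevel B (z - ε) a) (hb : HasLevel B (z + ε) b) : b - a ≤ k - 1 := by
  obtain ⟨r, hcross, hderiv, hRr⟩ := ((hB.eventually_forall_exists_eq_pi_mul hf hε ha hb).and
    ((eventually_forall_iteratedDeriv_mul_iteratedDeriv_polarEval_pos isCompact_Icc hk).and
      (eventually_ge_atTop R))).exists
  choose! t ht hBt using hcross
  have hinj : Set.InjOn t (Finset.Icc a b) := fun m hm n hn hmn ↦ by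
    have := (hBt m hm).symm.trans (hmn ▸ hBt n hn)
    exact_mod_cast mul_left_cancel₀ Real.pi_pos.ne' this
  have hcard : ((Finset.Icc a b).image t).card ≤ k := by
    refine card_zeros_le_of_iteratedDeriv_ne_zero (contDiff_polarEval (angularDeriv f) r)
      (a := z - ε) (b := z + ε) (fun θ hθ ↦ ?_) ?_ ?_
    · have := right_ne_zero_of_mul (hderiv θ hθ).ne'
      rwa [iteratedDeriv_succ', deriv_polarEval] at this
    · rw [Finset.coe_image]
      exact Set.image_subset_iff.mpr ht
    · refine Finset.forall_mem_image.mpr fun m hm ↦ ?_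
      rw [hB.angularDeriv_eq_zero_iff hRr, hBt m hm, mul_comm, Real.sin_int_mul_pi]
  rw [Finset.card_image_of_injOn hinj, Int.card_Icc] at hcard
  lia

/- Otherwise the angle would take two consecutive multiples of `π` on the sector, at which the
radial derivative of `f` has opposite signs. -/
lemma le_of_not_dirAtInfinity (hB : IsGradAngle f R B) (hf : 1 ≤ f.totalDegree)
    (hε : IsolatesZero (angularPart f) z ε)
    (hz : ¬ DirAtInfinity f (Real.cos z) (Real.sin z))
    (ha : HasLevel B (z - ε) a) (hb : HasLevel B (z + ε) b) : b ≤ a := by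
  by_contra! hab
  have hcrit : ∀ᶠ r in atTop, ∀ θ, polarEval r θ (angularDeriv f) = 0 →
      polarEval r θ (eulerDeriv f) ≠ 0 :=
    (eventually_ge_atTop R).mono fun r hr θ ↦ hB.eulerDeriv_ne_zero hr
  obtain ⟨r, hcross, hsign, hRr⟩ := ((hB.eventually_forall_exists_eq_pi_mul hf hε ha hb).and
    ((eventually_forall_angularPart_mul_eulerDeriv_pos_of_not_dirAtInfinity hf hε hcrit hz).and
      (eventually_ge_atTop R))).exists
  have hcos (k : ℤ) (hk : k ∈ Finset.Icc a b) :
      0 < angularPart f (z + ε) * Real.cos (k * Real.pi) := by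
    obtain ⟨θ, hθ, hBθ⟩ := hcross k hk
    rw [mul_comm] at hBθ
    have hD : polarEval r θ (angularDeriv f) = 0 := by
      rw [hB.angularDeriv_eq_zero_iff hRr, hBθ, Real.sin_int_mul_pi]
    simpa only [hB.mul_eulerDeriv_pos_iff hRr, hBθ] using hsign θ hθ hD
  have h0 := hcos a (Finset.mem_Icc.mpr ⟨le_rfl, hab.le⟩)
  have h1 := hcos (a + 1) (Finset.mem_Icc.mpr ⟨by lia, hab⟩)
  push_cast at h1
  rw [add_mul, one_mul, Real.cos_add_pi] at h1
  linarith

end IsGradAngle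

open Classical in
/-- The bound for the jump of the level of a gradient angle across the direction `z`: the
multiplicity of `z` in the leading form minus `2` at directions at infinity, and `0` elsewhere. -/
noncomputable def jumpBound (f : MvPolynomial (Fin 2) ℝ) (z : ℝ) : ℤ :=
  if DirAtInfinity f (Real.cos z) (Real.sin z) then
    linMult (homogeneousComponent f.totalDegree f) (Real.cos z) (Real.sin z) - 2
  else 0

lemma jumpBound_add_pi (f : MvPolynomial (Fin 2) ℝ) (z : ℝ) :
    jumpBound f (z + Real.pi) = jumpBound f z := by
  classical
  have hneg : (-1 : ℝ) ≠ 0 := neg_ne_zero.mpr one_ne_zero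
  rw [jumpBound, jumpBound, Real.cos_add_pi, Real.sin_add_pi, ← neg_one_mul (Real.cos z),
    ← neg_one_mul (Real.sin z), linMult_smul hneg]
  exact if_congr (dirAtInfinity_smul hneg) rfl rfl

lemma IsGradAngle.eventually_sub_le_jumpBound (hB : IsGradAngle f R B) (hf : 1 ≤ f.totalDegree)
    (hz : angularPart f z = 0) :
    ∀ᶠ ε in nhdsWithin 0 (Set.Ioi 0), ∀ a b, HasLevel B (z - ε) a → HasLevel B (z + ε) b →
      b - a ≤ jumpBound f z := by
  have hφ : AnalyticAt ℝ (angularPart f) z := analyticAt_polarEval _ 1 z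
  have hord := analyticOrderAt_angularPart (ne_zero_of_one_le_totalDegree hf) z
  set m := linMult (homogeneousComponent f.totalDegree f) (Real.cos z) (Real.sin z) with hm
  have hderiv : iteratedDeriv m (angularPart f) z ≠ 0 :=
    ((analyticOrderAt_eq_nat_iff_iteratedDeriv_eq_zero hφ).mp hord).2
  obtain ⟨k, hk⟩ : ∃ k, m = k + 1 := Nat.exists_eq_succ_of_ne_zero fun h0 ↦ by
    simp [h0, hz] at hderiv
  have hderiv_near : ∀ᶠ θ in nhds z, iteratedDeriv m (angularPart f) θ ≠ 0 :=
    ((contDiff_angularPart f).continuous_iteratedDeriv m le_rfl).continuousAt.eventually_ne hderiv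
  filter_upwards [eventually_isolatesZero_angularPart hf hz,
    eventually_forall_mem_Icc_of_eventually_nhds hderiv_near] with ε hε hεm a b ha hb
  rw [jumpBound, ← hm]
  split_ifs with hdir
  · have := hB.sub_le_of_iteratedDeriv_ne_zero hf hε (hk ▸ hεm) ha hb
    lia
  · exact sub_nonpos.mpr (hB.le_of_not_dirAtInfinity hf hε hdir ha hb)

end Jumps

section SumOfJumps

lemma sub_le_sum_of_eventually_sub_le {G : Type*} [AddCommGroup G] [PartialOrder G]
    [IsOrderedAddMonoid G] {g J : ℝ → G} {S : Finset ℝ} {α β : ℝ} (hαβ : α ≤ β)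
    (hS : ↑S ⊆ Set.Ioo α β)
    (hconst : ∀ x y, α ≤ x → x ≤ y → y ≤ β → (∀ w ∈ S, w ∉ Set.Icc x y) → g x = g y)
    (hjump : ∀ z ∈ S, ∀ᶠ ε in nhdsWithin 0 (Set.Ioi 0), g (z + ε) - g (z - ε) ≤ J z) :
    g β - g α ≤ ∑ z ∈ S, J z := by
  induction S using Finset.induction_on_max generalizing β with
  | empty => simp [hconst α β le_rfl hαβ le_rfl]
  | insert z S hmax ih =>
    rw [Finset.coe_insert, Set.insert_subset_iff] at hS
    obtain ⟨⟨hαz, hzβ⟩, hS⟩ := hS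
    have hgap : ∀ᶠ ε in nhdsWithin (0 : ℝ) (Set.Ioi 0), ∀ w ∈ S, ε < z - w := by
      rw [eventually_all_finset]
      exact fun w hw ↦ nhdsWithin_le_nhds (gt_mem_nhds (sub_pos.mpr (hmax w hw)))
    have hsmall : ∀ᶠ ε in nhdsWithin (0 : ℝ) (Set.Ioi 0), ε ∈ Set.Ioo 0 (min (z - α) (β - z)) :=
      Ioo_mem_nhdsGT (lt_min (sub_pos.mpr hαz) (sub_pos.mpr hzβ))
    obtain ⟨ε, hJ, hε, hεS⟩ := ((hjump z (Finset.mem_insert_self _ _)).and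
      (hsmall.and hgap)).exists
    obtain ⟨hε0, hεα, hεβ⟩ := hε.imp_right lt_min_iff.mp
    have hleft : g (z - ε) - g α ≤ ∑ z ∈ S, J z := by
      refine ih (by linarith) (fun w hw ↦ ⟨(hS hw).1, by linarith [hεS w hw]⟩)
        (fun x y hx hxy hy h ↦ hconst x y hx hxy (by linarith) fun w hw ↦ ?_)
        fun w hw ↦ hjump w (Finset.mem_insert_of_mem hw)
      rcases Finset.mem_insert.mp hw with rfl | hw
      · exact fun hwy ↦ by linarith [hwy.2]
      · exact h w hw
    have hright : g (z + ε) = g β := by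
      refine hconst _ _ (by linarith) (by linarith) le_rfl fun w hw hwy ↦ ?_
      rcases Finset.mem_insert.mp hw with rfl | hw
      · linarith [hwy.1]
      · linarith [hwy.1, hmax w hw]
    calc g β - g α = g (z + ε) - g (z - ε) + (g (z - ε) - g α) := by rw [hright]; abel
      _ ≤ J z + ∑ z ∈ S, J z := add_le_add hJ hleft
      _ = ∑ z ∈ insert z S, J z := (Finset.sum_insert fun hz ↦ (hmax z hz).false).symm

variable {f : MvPolynomial (Fin 2) ℝ}

lemma eventually_angularPart_ne_zero (hf : f ≠ 0) (z : ℝ) :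
    ∀ᶠ θ in nhdsWithin z {z}ᶜ, angularPart f θ ≠ 0 :=
  eventually_ne_zero_of_analyticOrderAt_ne_top (analyticAt_polarEval _ 1 z)
    (analyticOrderAt_angularPart hf z ▸ ENat.natCast_ne_top _)

lemma angularPart_add_pi_eq_zero_iff (f : MvPolynomial (Fin 2) ℝ) (θ : ℝ) :
    angularPart f (θ + Real.pi) = 0 ↔ angularPart f θ = 0 := by
  simp [angularPart_add_pi]

lemma exists_forall_mem_Ioo_iff_mem_Ico (hf : f ≠ 0) :
    ∃ α, angularPart f α ≠ 0 ∧ ∀ θ, angularPart f θ = 0 →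
      (θ ∈ Set.Ioo α (α + Real.pi) ↔ θ ∈ Set.Ico 0 Real.pi) := by
  obtain ⟨l, hl, hne⟩ := mem_nhdsLT_iff_exists_Ioo_subset.mp
    (nhdsWithin_mono 0 (fun _ hx ↦ ne_of_lt hx) (eventually_angularPart_ne_zero hf 0))
  obtain ⟨α, hα, hα0⟩ := exists_between (max_lt hl (neg_lt_zero.mpr Real.pi_pos))
  obtain ⟨hlα, hπα⟩ := max_lt_iff.mp hα
  refine ⟨α, hne ⟨hlα, hα0⟩, fun θ hθ ↦ ⟨fun h ↦ ⟨?_, by linarith [h.2]⟩,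
    fun h ↦ ⟨by linarith [h.1], ?_⟩⟩⟩
  · by_contra! h0
    exact hne ⟨hlα.trans h.1, h0⟩ hθ
  · by_contra! h0
    refine hne ⟨by linarith [hπα], by linarith [h.2]⟩
      ((angularPart_add_pi_eq_zero_iff f (θ - Real.pi)).mp ?_)
    rwa [sub_add_cancel]

variable {R : ℝ} {B : ℝ × ℝ → ℝ} {S : Finset ℝ}

lemma IsGradAngle.sub_le_sum_jumpBound (hB : IsGradAngle f R B) (hf : 1 ≤ f.totalDegree)
    {α β : ℝ} (hαβ : α ≤ β) (hα : angularPart f α ≠ 0) (hβ : angularPart f β ≠ 0)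
    (hS : ∀ θ, θ ∈ S ↔ θ ∈ Set.Ioo α β ∧ angularPart f θ = 0) {a b : ℤ}
    (ha : HasLevel B α a) (hb : HasLevel B β b) : b - a ≤ ∑ z ∈ S, jumpBound f z := by
  choose! level hlevel using fun θ (h : angularPart f θ ≠ 0) ↦ hB.exists_hasLevel hf h
  rw [ha.unique (hlevel α hα), hb.unique (hlevel β hβ)]
  refine sub_le_sum_of_eventually_sub_le hαβ (fun θ hθ ↦ ((hS θ).mp hθ).1)
    (fun x y hαx hxy hyβ hxyS ↦ ?_) fun z hz ↦ ?_
  · have hne : ∀ θ ∈ Set.uIcc x y, angularPart f θ ≠ 0 := fun θ hθ h0 ↦ by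
      rw [Set.uIcc_of_le hxy] at hθ
      refine hxyS θ ((hS θ).mpr ⟨⟨lt_of_le_of_ne (hαx.trans hθ.1) ?_,
        lt_of_le_of_ne (hθ.2.trans hyβ) ?_⟩, h0⟩) hθ <;> rintro rfl <;> contradiction
    exact (hB.hasLevel_of_forall_angularPart_ne_zero hf hne
      (hlevel x (hne x Set.left_mem_uIcc))).unique (hlevel y (hne y Set.right_mem_uIcc))
  · have hz0 := ((hS z).mp hz).2
    filter_upwards [hB.eventually_sub_le_jumpBound hf hz0,
      eventually_isolatesZero_angularPart hf hz0] with ε hjump hε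
    exact hjump _ _ (hlevel _ (hε.ne_zero hε.left_mem (by simp [hε.pos.ne'])))
      (hlevel _ (hε.ne_zero hε.right_mem (by simp [hε.pos.ne'])))

/- The levels at `α` and `α + 2 * π` differ by `2 * (i - 1)`, and the two half turns from `α` cross
the same directions. -/
lemma sub_one_le_sum_jumpBound (hf : 1 ≤ f.totalDegree) (hB : IsGradAngle f R B) {i : ℤ}
    (hi : ∀ r θ, B (r, θ + 2 * Real.pi) = B (r, θ) + 2 * Real.pi * (i - 1))
    (hS : ∀ θ, θ ∈ S ↔ θ ∈ Set.Ico 0 Real.pi ∧ angularPart f θ = 0) :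
    i - 1 ≤ ∑ z ∈ S, jumpBound f z := by
  have hpi := Real.pi_pos
  obtain ⟨α, hα, hIco⟩ :=
    exists_forall_mem_Ioo_iff_mem_Ico (ne_zero_of_one_le_totalDegree hf)
  have hα1 : angularPart f (α + Real.pi) ≠ 0 := by rwa [Ne, angularPart_add_pi_eq_zero_iff]
  have hα2 : angularPart f (α + Real.pi + Real.pi) ≠ 0 := by
    rwa [Ne, angularPart_add_pi_eq_zero_iff]
  obtain ⟨a, ha⟩ := hB.exists_hasLevel hf hα
  obtain ⟨b, hb⟩ := hB.exists_hasLevel hf hα1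
  have hc : HasLevel B (α + Real.pi + Real.pi) (a + 2 * (i - 1)) := ha.add_pi_mul fun r ↦ by
    rw [add_assoc, ← two_mul, hi]
    push_cast
    ring
  have hS1 (θ : ℝ) : θ ∈ S ↔ θ ∈ Set.Ioo α (α + Real.pi) ∧ angularPart f θ = 0 := by
    rw [hS, and_congr_left fun h ↦ (hIco θ h).symm]
  have hS2 (θ : ℝ) : θ ∈ S.map (addRightEmbedding Real.pi) ↔
      θ ∈ Set.Ioo (α + Real.pi) (α + Real.pi + Real.pi) ∧ angularPart f θ = 0 := by
    rw [← sub_add_cancel θ Real.pi, angularPart_add_pi_eq_zero_iff,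
      Set.add_mem_Ioo_iff_left, add_sub_cancel_right, add_sub_cancel_right, ← hS1]
    exact Finset.mem_map' (addRightEmbedding Real.pi)
  have hfirst := hB.sub_le_sum_jumpBound hf (by linarith) hα hα1 hS1 ha hb
  have hsecond := hB.sub_le_sum_jumpBound hf (by linarith) hα1 hα2 hS2 hb hc
  simp only [Finset.sum_map, addRightEmbedding_apply, jumpBound_add_pi] at hsecond
  lia

end SumOfJumps

section ProjectiveLine

/-- The angle in `(0, π)` of the direction `[a : 1]`. -/
noncomputable def arccot (a : ℝ) : ℝ := Real.pi / 2 - Real.arctan a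

lemma arccot_injective : Function.Injective arccot :=
  (sub_right_injective (b := Real.pi / 2)).comp Real.arctan_injective

lemma range_arccot : Set.range arccot = Set.Ioo 0 Real.pi := by
  have h : arccot = (fun x ↦ Real.pi / 2 - x) ∘ Real.arctan := rfl
  rw [h, Set.range_comp, Real.range_arctan, Set.image_const_sub_Ioo, sub_self, sub_neg_eq_add,
    add_halves]

lemma cos_arccot (a : ℝ) : Real.cos (arccot a) = Real.cos (Real.arctan a) * a := by
  rw [arccot, Real.cos_pi_div_two_sub, mul_comm, ← Real.tan_mul_cos (Real.cos_arctan_pos a).ne',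
    Real.tan_arctan]

lemma sin_arccot (a : ℝ) : Real.sin (arccot a) = Real.cos (Real.arctan a) * 1 := by
  rw [arccot, Real.sin_pi_div_two_sub, mul_one]

variable {f : MvPolynomial (Fin 2) ℝ}

lemma dirAtInfinity_arccot {a : ℝ} :
    DirAtInfinity f (Real.cos (arccot a)) (Real.sin (arccot a)) ↔ DirAtInfinity f a 1 := by
  rw [cos_arccot, sin_arccot, dirAtInfinity_smul (Real.cos_arctan_pos a).ne']

open Classical in
lemma jumpBound_arccot (f : MvPolynomial (Fin 2) ℝ) (a : ℝ) :
    jumpBound f (arccot a) = if DirAtInfinity f a 1 then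
      (linMult (homogeneousComponent f.totalDegree f) a 1 : ℤ) - 2 else 0 := by
  rw [jumpBound, if_congr dirAtInfinity_arccot rfl rfl, cos_arccot, sin_arccot,
    linMult_smul (Real.cos_arctan_pos a).ne']

open Classical in
lemma jumpBound_zero (f : MvPolynomial (Fin 2) ℝ) :
    jumpBound f 0 = if DirAtInfinity f 1 0 then
      (linMult (homogeneousComponent f.totalDegree f) 1 0 : ℤ) - 2 else 0 := by
  rw [jumpBound, Real.cos_zero, Real.sin_zero]

lemma angularPart_eq_zero_of_jumpBound_ne_zero (hf : 1 ≤ f.totalDegree) {z : ℝ}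
    (h : jumpBound f z ≠ 0) : angularPart f z = 0 := by
  by_contra hz
  exact h (if_neg fun hdir ↦ hz (angularPart_eq_zero_of_dirAtInfinity hf hdir))

lemma finite_setOf_angularPart_eq_zero (hf : f ≠ 0) :
    {θ ∈ Set.Ico 0 Real.pi | angularPart f θ = 0}.Finite :=
  (finite_setOf_eq_zero_of_isCompact isCompact_Icc fun z _ ↦
    eventually_angularPart_ne_zero hf z).subset fun _ h ↦ ⟨Set.Ico_subset_Icc_self h.1, h.2⟩

lemma finite_setOf_dirAtInfinity (hf : 1 ≤ f.totalDegree) :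
    {a : ℝ | DirAtInfinity f a 1}.Finite := by
  refine ((finite_setOf_angularPart_eq_zero (ne_zero_of_one_le_totalDegree hf)).preimage
    arccot_injective.injOn).subset fun a ha ↦ ⟨?_, ?_⟩
  · exact Set.Ioo_subset_Ico_self (range_arccot ▸ Set.mem_range_self a)
  · exact angularPart_eq_zero_of_dirAtInfinity hf (dirAtInfinity_arccot.mpr ha)

lemma finsum_jumpBound_arccot (hf : 1 ≤ f.totalDegree) :
    ∑ᶠ a, jumpBound f (arccot a) =
      (∑ᶠ a ∈ {a : ℝ | DirAtInfinity f a 1},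
        linMult (homogeneousComponent f.totalDegree f) a 1 : ℕ) -
      2 * ({a : ℝ | DirAtInfinity f a 1}.ncard : ℤ) := by
  have hfin := finite_setOf_dirAtInfinity hf
  have hite : ∑ᶠ a, jumpBound f (arccot a) = ∑ᶠ a ∈ {a : ℝ | DirAtInfinity f a 1},
      ((linMult (homogeneousComponent f.totalDegree f) a 1 : ℤ) - 2) := by
    simp_rw [jumpBound_arccot, ← finsum_eq_if, Set.mem_ofPred_eq]
  rw [hite, finsum_mem_eq_finite_toFinset_sum _ hfin, finsum_mem_eq_finite_toFinset_sum _ hfin,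
    Finset.sum_sub_distrib, Finset.sum_const, nsmul_eq_mul, ← Set.ncard_eq_toFinset_card _ hfin,
    Nat.cast_sum, mul_comm 2]

lemma sum_jumpBound_eq_finsum (hf : 1 ≤ f.totalDegree) {S : Finset ℝ}
    (hS : ∀ θ, θ ∈ S ↔ θ ∈ Set.Ico 0 Real.pi ∧ angularPart f θ = 0) :
    ∑ z ∈ S, jumpBound f z = jumpBound f 0 + ∑ᶠ a, jumpBound f (arccot a) := by
  have hsupp {z : ℝ} (hz : z ∈ Set.Ico 0 Real.pi ∩ Function.support (jumpBound f)) : z ∈ S :=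
    (hS z).mpr ⟨hz.1, angularPart_eq_zero_of_jumpBound_ne_zero hf hz.2⟩
  have hIco : Set.Ico 0 Real.pi = insert 0 (Set.range arccot) := by
    rw [range_arccot, Set.insert_eq, Set.union_comm, Set.Ioo_union_left Real.pi_pos]
  calc ∑ z ∈ S, jumpBound f z = ∑ᶠ z ∈ Set.Ico 0 Real.pi, jumpBound f z :=
        (finsum_mem_eq_sum_of_subset _ (fun _ ↦ hsupp) fun z hz ↦ ((hS z).mp hz).1).symm
    _ = jumpBound f 0 + ∑ᶠ z ∈ Set.range arccot, jumpBound f z := by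
        rw [hIco, finsum_mem_insert' _ (by simp [range_arccot])]
        exact S.finite_toSet.subset fun z hz ↦ hsupp (hIco ▸ ⟨Or.inr hz.1, hz.2⟩)
    _ = jumpBound f 0 + ∑ᶠ a, jumpBound f (arccot a) := by
        rw [finsum_mem_range arccot_injective]

lemma sum_jumpBound (hf : 1 ≤ f.totalDegree) {S : Finset ℝ}
    (hS : ∀ θ, θ ∈ S ↔ θ ∈ Set.Ico 0 Real.pi ∧ angularPart f θ = 0) :
    ∑ z ∈ S, jumpBound f z = (tildeDR f f.totalDegree : ℤ) - 2 * (lSecond f : ℤ) := by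
  rw [sum_jumpBound_eq_finsum hf hS, finsum_jumpBound_arccot hf, jumpBound_zero, tildeDR, lSecond]
  split_ifs <;> push_cast <;> ring

end ProjectiveLine

lemma one_le_totalDegree_of_not_isCriticalPt {f : MvPolynomial (Fin 2) ℝ} {p : ℝ × ℝ}
    (h : ¬ IsCriticalPt f p) : 1 ≤ f.totalDegree := by
  by_contra! h0
  rw [Nat.lt_one_iff, totalDegree_eq_zero_iff_eq_C] at h0
  refine h ?_
  rw [h0]
  simp [IsCriticalPt, evalP]

theorem index_le_one_add_tildeDR_sub_two_lSecond_general
    (f : MvPolynomial (Fin 2) ℝ) (R : ℝ) (hR : 0 < R)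
    (hadm : ∀ p : ℝ × ℝ, IsCriticalPt f p → p.1 ^ 2 + p.2 ^ 2 < R ^ 2)
    (i : ℤ) (hi : (i : ℝ) = gradIndex f R) :
    i ≤ 1 + (tildeDR f f.totalDegree : ℤ) - 2 * (lSecond f : ℤ) := by
  have hcrit : ∀ r ≥ R, ∀ θ, ¬ IsCriticalPt f (r * Real.cos θ, r * Real.sin θ) := by
    intro r hr θ hp
    refine (pow_le_pow_left₀ hR.le hr 2).not_gt (lt_of_eq_of_lt ?_ (hadm _ hp))
    linear_combination -r ^ 2 * Real.sin_sq_add_cos_sq θ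
  have hf : 1 ≤ f.totalDegree := one_le_totalDegree_of_not_isCriticalPt (hcrit R le_rfl 0)
  have hzeros := finite_setOf_angularPart_eq_zero (ne_zero_of_one_le_totalDegree hf)
  obtain ⟨B, hB, hturn⟩ := exists_isGradAngle hR hcrit hi
  have hjump := sub_one_le_sum_jumpBound hf hB hturn fun _ ↦ hzeros.mem_toFinset
  rw [sum_jumpBound hf fun _ ↦ hzeros.mem_toFinset] at hjump
  linarith

theorem index_le_one_add_tildeDR_sub_two_lSecond
    (f : MvPolynomial (Fin 2) ℝ) (d : ℕ) (hd : f.totalDegree = d) (hd1 : 1 ≤ d)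
    (hfin : {p : ℝ × ℝ | IsCriticalPt f p}.Finite)
    (hLfin : {a : ℝ | DirAtInfinity f a 1}.Finite)
    (R : ℝ) (hR : 0 < R)
    (hadm : ∀ p : ℝ × ℝ, IsCriticalPt f p → p.1 ^ 2 + p.2 ^ 2 < R ^ 2)
    (i : ℤ) (hi : (i : ℝ) = gradIndex f R) :
    i ≤ 1 + (tildeDR f d : ℤ) - 2 * (lSecond f : ℤ) :=
  hd ▸ index_le_one_add_tildeDR_sub_two_lSecond_general f R hR hadm i hi
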